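/- The complex (DEnd_*(n), δ) of local differential operator endomorphisms of the regraded horizontal complex is acyclic in positive dimensions: H_k(DEnd_*(n), δ) = 0 for all k > 0. -/

import Mathlib

/-!
A cycle in `DEnd` is a matrix of multidifferential operators, indexed by the form components of the
inputs and of the output. The differential is the difference of an output part, composition with
`d_H`, and an input part, precomposition with `d_H^{⊗n}`. The two parts commute and square to zero,
so the theorem reduces to acyclicity of the output part: for fixed input components, a closed form
of degree `w < N` with multidifferential coefficients is exact (`exact_G`). A primitive of a cycle
is then built by decreasing induction on the total input form degree (`cycle_is_boundary`). The
output form degree of a component of a degree `k` map is at most `N - k`, hence less than `N`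
because `k > 0`.

Exactness comes from an action of the Weyl algebra on multidifferential operators: `D i` is
composition with `d/dx^i` and `X i` is the commutator with multiplication by `x^i` in the first
argument. These satisfy `[X j, D i] = δ_{ij}`, so the Koszul contraction `K` built from the `X i`
satisfies the Cartan formula `dK + Kd = E + (N - w)` with `E = ∑ D i ∘ X i` (`homotopy`).
In polarized form, an operator is a series of terms
`(d/dx)^I (c · ∂^{α_1} f_1 · ∏_{l ≥ 2} (d/dx)^{I_l} ∂^{α_l} f_l)`, and each term is an eigenvector
of `E` with eigenvalue `|I| ≥ 0` (`EE_eigen`). Hence `E + a` is bijective for every `a > 0`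
(`surj_G`, `inj_G`), and closed forms of degree `w < N` are exact (`weyl_exact`).

The operators are infinite series, and the finiteness condition on their coefficients makes them
finite on functions depending only on the `u_J` with `|J| ≤ r`. They are therefore handled through
the filtration `W` by differential degree and its completion `G`. Both parts of the differential
preserve `G` (`DG_G`, `PC_G`), and `G` consists of the restrictions to local functions of the
operators admitting a polarized presentation (`IsPLDO.exists_G`, `IsPLDO.of_G`).
-/

open scoped BigOperators

namespace JetBundle

/-- Multi-indices `J = (j_1,…,j_N)`. -/
abbrev MI (N : ℕ) := Fin N → ℕ

/-- A point of the infinite jet bundle `J^∞E`, with coordinates `(x^i, u_J)`. -/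
abbrev JetPt (N : ℕ) := (Fin N → ℝ) × (MI N → ℝ)

/-- Real-valued functions on the infinite jet bundle. -/
abbrev Fn (N : ℕ) := JetPt N → ℝ

/-- Partial derivative with respect to the base coordinate `x^i`. -/
noncomputable def pderivX {N : ℕ} (i : Fin N) (f : Fn N) : Fn N :=
  fun p => deriv (fun t => f (Function.update p.1 i t, p.2)) (p.1 i)

/-- Partial derivative with respect to the jet coordinate `u_J`. -/
noncomputable def pderivU {N : ℕ} (J : MI N) (f : Fn N) : Fn N :=
  fun p => deriv (fun t => f (p.1, Function.update p.2 J t)) (p.2 J)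

/-- `iJ` : the multi-index `J` with its `i`-th entry increased by `1`. -/
def inc {N : ℕ} (i : Fin N) (J : MI N) : MI N := Function.update J i (J i + 1)

/-- The total derivative `d/dx^i = ∂/∂x^i + Σ_J u_{iJ} ∂/∂u_J`. -/
noncomputable def Dtot {N : ℕ} (i : Fin N) (f : Fn N) : Fn N :=
  fun p => pderivX i f p + ∑' J : MI N, p.2 (inc i J) * pderivU J f p

/-- Iterated total derivative `(d/dx)^I`. -/
noncomputable def DPow {N : ℕ} (I : MI N) : Fn N → Fn N :=
  (List.finRange N).foldr (fun i g => (Dtot i)^[I i] ∘ g) id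

/-- Iterated vertical derivative `(∂/∂u)^α` for a finitely supported exponent `α`. -/
noncomputable def UPow {N : ℕ} (α : MI N →₀ ℕ) : Fn N → Fn N :=
  α.support.toList.foldr (fun J g => (pderivU J)^[α J] ∘ g) id

/-- A local function: a smooth function of the base coordinates and
finitely many jet coordinates `u_J`. -/
def IsLocal {N : ℕ} (f : Fn N) : Prop :=
  ∃ (S : Finset (MI N)) (g : ((Fin N → ℝ) × (↥S → ℝ)) → ℝ),
    ContDiff ℝ (⊤ : ℕ∞) g ∧ ∀ p : JetPt N, f p = g (p.1, fun J => p.2 J.1)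

/-- The formal differential degree of an exponent `α`: the maximal `|J|` with `α J ≠ 0`. -/
def degf {N : ℕ} (α : MI N →₀ ℕ) : ℕ := α.support.sup fun J => ∑ i, J i

/-- Index type for the coefficients of an `n`-multilinear local differential operator:
a tuple of multi-indices `(I_1,…,I_n)` and vertical exponents `(α_1,…,α_n)`. -/
abbrev Idx (N n : ℕ) := (Fin n → MI N) × (Fin n → (MI N →₀ ℕ))

/-- Coefficient data of an `n`-multilinear local differential operator. -/
abbrev OpData (N n : ℕ) := Idx N n → Fn N

/-- `n`-multilinear operators on functions on the jet bundle. -/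
abbrev Op (N n : ℕ) := (Fin n → Fn N) → Fn N

/-- An `n`-tuple of local functions. -/
def LocalTuple {N n : ℕ} (f : Fin n → Fn N) : Prop := ∀ j, IsLocal (f j)

/-- Coefficient data is admissible if all coefficients are local functions and, for each `m`,
only finitely many coefficients with `Σ_j deg_f(α_j) ≤ m` are nonzero. -/
def Good {N n : ℕ} (q : OpData N n) : Prop :=
  (∀ Iα, IsLocal (q Iα)) ∧
    ∀ m : ℕ, {Iα : Idx N n | q Iα ≠ 0 ∧ ∑ j, degf (Iα.2 j) ≤ m}.Finite

/-- The (unpolarized) realization of coefficient data: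
`A(f_1,…,f_n) = Σ p_{I,α} Π_j (d/dx)^{I_j} (∂/∂u)^{α_j} f_j`. -/
noncomputable def realizeU {N n : ℕ} (q : OpData N n) (f : Fin n → Fn N) : Fn N :=
  fun pt => ∑' Iα : Idx N n, q Iα pt * ∏ j, DPow (Iα.1 j) (UPow (Iα.2 j) (f j)) pt

/-- The polarized realization of coefficient data: the slot `I_1` records powers of
`d/dy_1 = Σ_j d/dx_j`, i.e. total derivatives applied to the whole product, while for `j ≥ 2`
the slot `I_j` records powers of `d/dy_j = d/dx_j` acting on the `j`-th argument:
`A(f_1,…,f_n) = Σ q_{I;α} (d/dx)^{I_1} [ (∂/∂u)^{α_1}f_1 · Π_{j≥2} (d/dx)^{I_j}(∂/∂u)^{α_j} f_j ]`. -/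
noncomputable def realizeP {N n : ℕ} [NeZero n] (q : OpData N n) (f : Fin n → Fn N) : Fn N :=
  fun pt => ∑' Iα : Idx N n, q Iα pt *
    DPow (Iα.1 0) (fun p => ∏ j,
      if j = (0 : Fin n) then UPow (Iα.2 j) (f j) p
      else DPow (Iα.1 j) (UPow (Iα.2 j) (f j)) p) pt

/-- The characteristic, on polarized coefficient data:
`χ(q)_{(0,I_2,…,I_n);α} := Σ_{I_1} (−1)^{|I_1|} (d/dx)^{I_1} q_{I_1,I_2,…,I_n;α}`. -/
noncomputable def chiData {N n : ℕ} [NeZero n] (q : OpData N n) : OpData N n :=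
  fun Iα =>
    if Iα.1 0 = 0 then
      fun pt => ∑' K : MI N,
        (-1 : ℝ) ^ (∑ i, K i) * DPow K (q (Function.update Iα.1 0 K, Iα.2)) pt
    else 0

/-- `q` is a polarized presentation of the operator `A` (on local functions). -/
def Presents {N n : ℕ} [NeZero n] (q : OpData N n) (A : Op N n) : Prop :=
  ∀ f, LocalTuple f → ∀ pt, A f pt = realizeP q f pt

/-- `A` is an `n`-multilinear local differential operator (unpolarized form). -/
def IsLDO {N n : ℕ} (A : Op N n) : Prop :=
  ∃ q : OpData N n, Good q ∧ ∀ f, LocalTuple f → ∀ pt, A f pt = realizeU q f pt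

/-- `A` is an `n`-multilinear local differential operator, given by a polarized presentation. -/
def IsPLDO {N n : ℕ} [NeZero n] (A : Op N n) : Prop :=
  ∃ q : OpData N n, Good q ∧ Presents q A

/-- `A` is an `n`-multilinear local differential operator with vanishing characteristic. -/
def ChiZero {N n : ℕ} [NeZero n] (A : Op N n) : Prop :=
  ∃ q : OpData N n, Good q ∧ Presents q A ∧
    ∀ f, LocalTuple f → ∀ pt, realizeP (chiData q) f pt = 0

/-- Precomposition `A ∘ d/dx^i_j` with the total derivative acting on the `j`-th argument. -/
noncomputable def precompD {N n : ℕ} (A : Op N n) (i : Fin N) (j : Fin n) : Op N n :=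
  fun f => A (Function.update f j (Dtot i (f j)))

/-- A horizontal form, recorded by its coefficients on the basis
`(dx)^ε = (dx^1)^{ε^1} ∧ ⋯ ∧ (dx^N)^{ε^N}`, `ε : Fin N → Bool`. -/
abbrev Form (N : ℕ) := (Fin N → Bool) → Fn N

/-- The form-degree `|ε|`. -/
def wt {N : ℕ} (ε : Fin N → Bool) : ℕ := ∑ i, if ε i then 1 else 0

/-- The sign exponent: the number of entries of `ε` below `i` which are set. -/
def pos {N : ℕ} (i : Fin N) (ε : Fin N → Bool) : ℕ := ∑ l, if l < i ∧ ε l then 1 else 0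

/-- The horizontal differential `d_H ω = Σ_i dx^i ∧ (d/dx^i) ω`. -/
noncomputable def dH {N : ℕ} (ω : Form N) : Form N :=
  fun δ pt => ∑ i : Fin N,
    if δ i then (-1 : ℝ) ^ pos i δ * Dtot i (ω (Function.update δ i false)) pt else 0

/-- A matrix of operators acting on horizontal forms (linear case). -/
abbrev FormOp (N : ℕ) := (Fin N → Bool) → (Fin N → Bool) → (Fn N → Fn N)

/-- Application of a matrix of operators to a form. -/
noncomputable def applyFO {N : ℕ} (M : FormOp N) (ω : Form N) : Form N :=
  fun δ pt => ∑ ε : Fin N → Bool, M ε δ (ω ε) pt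

/-- A degree element of `DEnd(n)`: a matrix indexed by basis multidegrees of the inputs
`(ε_1,…,ε_n)` and of the output `δ`, with `n`-multilinear operator entries. -/
abbrev DMat (N n : ℕ) := (Fin n → (Fin N → Bool)) → (Fin N → Bool) → Op N n

/-- All matrix entries are local differential operators. -/
def LDOMat {N n : ℕ} [NeZero n] (F : DMat N n) : Prop := ∀ εs δ, IsPLDO (F εs δ)

/-- `F` represents a degree-`k` map of the regraded horizontal complexes
(`Ω_i := Ω^{N−i,0}`): the entry at `(ε⃗, δ)` vanishes unless
`N − wt δ = k + Σ_j (N − wt ε_j)`. -/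
def GradedMat {N n : ℕ} (k : ℤ) (F : DMat N n) : Prop :=
  ∀ εs δ, F εs δ ≠ 0 → (wt δ : ℤ) = (N : ℤ) - k - ∑ j, ((N : ℤ) - (wt (εs j) : ℤ))

/-- The differential `(δf)_s = d_H f_s − (−1)^k f_{s−1} d_H^{⊗n}` of the complex `DEnd_*(n)`,
written out on matrix entries. -/
noncomputable def deltaMat {N n : ℕ} (k : ℤ) (F : DMat N n) : DMat N n :=
  fun εs δ g =>
    (fun pt => ∑ i : Fin N,
      if δ i then (-1 : ℝ) ^ pos i δ * Dtot i (F εs (Function.update δ i false) g) pt else 0)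
    -
    ((-1 : ℝ) ^ k) • (fun pt => ∑ j : Fin n, ∑ i : Fin N,
      if εs j i = false then
        (-1 : ℝ) ^ ((∑ l ∈ Finset.univ.filter fun l => l < j, wt (εs l)) + pos i (εs j)) *
          F (Function.update εs j (Function.update (εs j) i true)) δ
            (Function.update g j (Dtot i (g j))) pt
      else 0)

/-- A matrix of operators vanishes (on local arguments). -/
def MatZeroLoc {N n : ℕ} (F : DMat N n) : Prop :=
  ∀ εs δ g, LocalTuple g → ∀ pt, F εs δ g pt = 0

/-- Two matrices of operators agree (on local arguments). -/
def MatEqLoc {N n : ℕ} (F G : DMat N n) : Prop :=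
  ∀ εs δ g, LocalTuple g → ∀ pt, F εs δ g pt = G εs δ g pt

/-- The projection `B_0 : DEnd_0(n) → LDO(n)`, i.e. the component `f_0` on the identifications
`[(Ω_*)^{⊗n}]_0 ≅ Loc(E)^{⊗n}`, `Ω_0 ≅ Loc(E)`. -/
def B0 {N n : ℕ} (F : DMat N n) : Op N n := F (fun _ _ => true) fun _ => true

/-- A form with coefficients in `LDO(n)`: an element of the operator complex `O^*(n)`. -/
abbrev OForm (N n : ℕ) := (Fin N → Bool) → Op N n

/-- The differential of the operator complex: `d(A (dx)^ε) = Σ_i (d/dx^i ∘ A) dx^i ∧ (dx)^ε`. -/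
noncomputable def dO {N n : ℕ} (ω : OForm N n) : OForm N n :=
  fun δ g pt => ∑ i : Fin N,
    if δ i then (-1 : ℝ) ^ pos i δ * Dtot i (ω (Function.update δ i false) g) pt else 0

/-- An element of `O^*(n)` concentrated in degree `k`. -/
def OGraded {N n : ℕ} (k : ℕ) (ω : OForm N n) : Prop := ∀ δ, ω δ ≠ 0 → wt δ = k

/-- All coefficients are local differential operators. -/
def OLDO {N n : ℕ} [NeZero n] (ω : OForm N n) : Prop := ∀ δ, IsPLDO (ω δ)

/-- An element of `O^*(n)` vanishes on local arguments. -/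
def OZeroLoc {N n : ℕ} (ω : OForm N n) : Prop :=
  ∀ δ g, LocalTuple g → ∀ pt, ω δ g pt = 0

/-- Two elements of `O^*(n)` agree on local arguments. -/
def OEqLoc {N n : ℕ} (ω η : OForm N n) : Prop :=
  ∀ δ g, LocalTuple g → ∀ pt, ω δ g pt = η δ g pt

/-- The Euler operator `E(L dx^1∧⋯∧dx^N) = Σ_I (−1)^{|I|} (d/dx)^I (∂L/∂u_I)`. -/
noncomputable def Euler {N : ℕ} (L : Fn N) : Fn N :=
  fun pt => ∑' I : MI N, (-1 : ℝ) ^ (∑ i, I i) * DPow I (pderivU I L) pt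

end JetBundle
namespace JetBundle

/-! ### Local functions and directional derivatives -/

/-- The projection of a jet onto its base point and the coordinates `u_J`, `J ∈ S`. -/
def proj {N : ℕ} (S : Finset (MI N)) : JetPt N →ₗ[ℝ] (Fin N → ℝ) × (↥S → ℝ) where
  toFun p := (p.1, fun J => p.2 J.1)
  map_add' _ _ := rfl
  map_smul' _ _ := rfl

lemma IsLocal.exists_proj {N : ℕ} {f : Fn N} (hf : IsLocal f) :
    ∃ (S : Finset (MI N)) (g : ((Fin N → ℝ) × (↥S → ℝ)) → ℝ),
      ContDiff ℝ (⊤ : ℕ∞) g ∧ f = g ∘ proj S := by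
  obtain ⟨S, g, hg, h⟩ := hf
  exact ⟨S, g, hg, funext h⟩

lemma isLocal_comp_proj {N : ℕ} (S : Finset (MI N)) {g : ((Fin N → ℝ) × (↥S → ℝ)) → ℝ}
    (hg : ContDiff ℝ (⊤ : ℕ∞) g) : IsLocal (g ∘ proj S) :=
  ⟨S, g, hg, fun _ => rfl⟩

lemma exists_proj_mono {N : ℕ} {S T : Finset (MI N)} (hST : S ⊆ T)
    {g : ((Fin N → ℝ) × (↥S → ℝ)) → ℝ} (hg : ContDiff ℝ (⊤ : ℕ∞) g) :
    ∃ g' : ((Fin N → ℝ) × (↥T → ℝ)) → ℝ,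
      ContDiff ℝ (⊤ : ℕ∞) g' ∧ g ∘ proj S = g' ∘ proj T :=
  ⟨fun y => g (y.1, fun J => y.2 ⟨J.1, hST J.2⟩), hg.comp (by fun_prop), rfl⟩

/-- Two local functions are smooth functions of one common finite set of coordinates. -/
lemma exists_proj_pair {N : ℕ} {f₁ f₂ : Fn N} (h₁ : IsLocal f₁) (h₂ : IsLocal f₂) :
    ∃ (S : Finset (MI N)) (g₁ g₂ : ((Fin N → ℝ) × (↥S → ℝ)) → ℝ),
      ContDiff ℝ (⊤ : ℕ∞) g₁ ∧ ContDiff ℝ (⊤ : ℕ∞) g₂ ∧ f₁ = g₁ ∘ proj S ∧ f₂ = g₂ ∘ proj S := by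
  classical
  obtain ⟨S₁, g₁, hg₁, rfl⟩ := h₁.exists_proj
  obtain ⟨S₂, g₂, hg₂, rfl⟩ := h₂.exists_proj
  obtain ⟨g₁', h₁', e₁⟩ := exists_proj_mono (Finset.subset_union_left (s₂ := S₂)) hg₁
  obtain ⟨g₂', h₂', e₂⟩ := exists_proj_mono (Finset.subset_union_right (s₁ := S₁)) hg₂
  exact ⟨_, g₁', g₂', h₁', h₂', e₁, e₂⟩

lemma IsLocal.add {N : ℕ} {f₁ f₂ : Fn N} (h₁ : IsLocal f₁) (h₂ : IsLocal f₂) :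
    IsLocal (f₁ + f₂) := by
  obtain ⟨S, g₁, g₂, hg₁, hg₂, rfl, rfl⟩ := exists_proj_pair h₁ h₂
  exact isLocal_comp_proj S (hg₁.add hg₂)

lemma IsLocal.mul {N : ℕ} {f₁ f₂ : Fn N} (h₁ : IsLocal f₁) (h₂ : IsLocal f₂) :
    IsLocal (f₁ * f₂) := by
  obtain ⟨S, g₁, g₂, hg₁, hg₂, rfl, rfl⟩ := exists_proj_pair h₁ h₂
  exact isLocal_comp_proj S (hg₁.mul hg₂)

lemma isLocal_const {N : ℕ} (c : ℝ) : IsLocal (fun _ : JetPt N => c) :=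
  isLocal_comp_proj ∅ (g := fun _ => c) contDiff_const

/-- The algebra `Loc(E)` of local functions. -/
def Loc (N : ℕ) : Subalgebra ℝ (Fn N) where
  carrier := {f | IsLocal f}
  mul_mem' := IsLocal.mul
  add_mem' := IsLocal.add
  algebraMap_mem' := isLocal_const

/-- The derivative of `f` in the direction of the tangent vector `v`. -/
noncomputable def dir {N : ℕ} (v : JetPt N) (f : Fn N) : Fn N :=
  fun p => deriv (fun t : ℝ => f (p + t • v)) 0

lemma hasDerivAt_comp_proj {N : ℕ} (v : JetPt N) {S : Finset (MI N)}
    {g : ((Fin N → ℝ) × (↥S → ℝ)) → ℝ} (hg : ContDiff ℝ (⊤ : ℕ∞) g) (p : JetPt N) :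
    HasDerivAt (fun t : ℝ => (g ∘ proj S) (p + t • v))
      (fderiv ℝ g (proj S p) (proj S v)) 0 := by
  have h1 : HasDerivAt (fun t : ℝ => proj S p + t • proj S v) (proj S v) 0 := by
    simpa using ((hasDerivAt_id (0 : ℝ)).smul_const (proj S v)).const_add (proj S p)
  have h2 : HasFDerivAt g (fderiv ℝ g (proj S p)) (proj S p + (0 : ℝ) • proj S v) := by
    simpa using (hg.differentiable (by simp) (proj S p)).hasFDerivAt
  have := h2.comp_hasDerivAt (0 : ℝ) h1
  refine this.congr_of_eventuallyEq (Filter.Eventually.of_forall fun t => ?_)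
  simp

lemma dir_comp_proj {N : ℕ} (v : JetPt N) {S : Finset (MI N)}
    {g : ((Fin N → ℝ) × (↥S → ℝ)) → ℝ} (hg : ContDiff ℝ (⊤ : ℕ∞) g) :
    dir v (g ∘ proj S) = (fun y => fderiv ℝ g y (proj S v)) ∘ proj S :=
  funext fun p => (hasDerivAt_comp_proj v hg p).deriv

lemma contDiff_fderiv_apply {E : Type*} [NormedAddCommGroup E] [NormedSpace ℝ E] {g : E → ℝ}
    (hg : ContDiff ℝ (⊤ : ℕ∞) g) (v : E) : ContDiff ℝ (⊤ : ℕ∞) (fun y => fderiv ℝ g y v) :=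
  (hg.fderiv_right (m := (⊤ : ℕ∞)) (by norm_cast)).clm_apply contDiff_const

lemma IsLocal.dir {N : ℕ} {f : Fn N} (hf : IsLocal f) (v : JetPt N) : IsLocal (dir v f) := by
  obtain ⟨S, g, hg, rfl⟩ := hf.exists_proj
  rw [dir_comp_proj v hg]
  exact isLocal_comp_proj S (contDiff_fderiv_apply hg _)

lemma IsLocal.differentiableAt {N : ℕ} {f : Fn N} (hf : IsLocal f) (v p : JetPt N) :
    DifferentiableAt ℝ (fun t : ℝ => f (p + t • v)) 0 := by
  obtain ⟨S, g, hg, rfl⟩ := hf.exists_proj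
  exact (hasDerivAt_comp_proj v hg p).differentiableAt

/-- Directional derivatives of local functions commute, by symmetry of second derivatives. -/
lemma dir_comm {N : ℕ} {f : Fn N} (hf : IsLocal f) (v w : JetPt N) :
    dir v (dir w f) = dir w (dir v f) := by
  obtain ⟨S, g, hg, rfl⟩ := hf.exists_proj
  have key : ∀ a b : JetPt N, ∀ y, fderiv ℝ (fun z => fderiv ℝ g z (proj S b)) y (proj S a)
      = fderiv ℝ (fderiv ℝ g) y (proj S a) (proj S b) := by
    intro a b y
    have hd : DifferentiableAt ℝ (fderiv ℝ g) y :=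
      (hg.fderiv_right (m := (⊤ : ℕ∞)) (by norm_cast)).differentiable (by simp) y
    rw [fderiv_clm_apply hd (differentiableAt_const _)]
    simp
  rw [dir_comp_proj w hg, dir_comp_proj v hg, dir_comp_proj v (contDiff_fderiv_apply hg _),
    dir_comp_proj w (contDiff_fderiv_apply hg _)]
  funext p
  simp only [Function.comp_apply, key]
  exact (hg.contDiffAt.isSymmSndFDerivAt (n := (⊤ : ℕ∞)) (by simp; norm_cast)) _ _

/-- The directional derivative as a derivation of the algebra of local functions. -/
noncomputable def dirD {N : ℕ} (v : JetPt N) : Derivation ℝ (Loc N) (Loc N) :=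
  Derivation.mk'
    { toFun := fun f => ⟨dir v f.1, f.2.dir v⟩
      map_add' := fun f g => Subtype.ext <| funext fun p =>
        deriv_add (f.2.differentiableAt v p) (g.2.differentiableAt v p)
      map_smul' := fun c f => Subtype.ext <| funext fun p =>
        deriv_const_smul c (f.2.differentiableAt v p) }
    (fun f g => Subtype.ext <| funext fun p => by
      have := deriv_mul (f.2.differentiableAt v p) (g.2.differentiableAt v p)
      simp only [zero_smul, add_zero] at this
      refine Eq.trans this ?_
      change _ = f.1 p * dir v g.1 p + g.1 p * dir v f.1 p
      simp only [dir]; ring)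

lemma dirD_comm {N : ℕ} (v w : JetPt N) (f : Loc N) :
    dirD v (dirD w f) = dirD w (dirD v f) :=
  Subtype.ext (dir_comm f.2 v w)

/-- `∂/∂x^i` on local functions. -/
noncomputable def XD {N : ℕ} (i : Fin N) : Derivation ℝ (Loc N) (Loc N) := dirD (Pi.single i 1, 0)

/-- `∂/∂u_J` on local functions. -/
noncomputable def UD {N : ℕ} (J : MI N) : Derivation ℝ (Loc N) (Loc N) := dirD (0, Pi.single J 1)

lemma update_eq_add_single {ι : Type*} [DecidableEq ι] (x : ι → ℝ) (i : ι) (t : ℝ) :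
    Function.update x i t = x + (t - x i) • Pi.single i 1 := by
  ext j
  rcases eq_or_ne j i with rfl | h <;> simp [*]

lemma coe_XD {N : ℕ} (i : Fin N) (f : Loc N) : (XD i f : Fn N) = pderivX i f.1 := by
  funext p
  have := deriv_comp_sub_const (f := fun t : ℝ => f.1 (p + t • ((Pi.single i 1, 0) : JetPt N)))
    (p.1 i) (p.1 i)
  rw [sub_self] at this
  refine this.symm.trans ?_
  simp only [pderivX, update_eq_add_single]
  refine congrArg (fun h : ℝ → ℝ => deriv h (p.1 i)) (funext fun t => congrArg f.1 ?_)
  ext <;> simp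

lemma coe_UD {N : ℕ} (J : MI N) (f : Loc N) : (UD J f : Fn N) = pderivU J f.1 := by
  funext p
  have := deriv_comp_sub_const (f := fun t : ℝ => f.1 (p + t • ((0, Pi.single J 1) : JetPt N)))
    (p.2 J) (p.2 J)
  rw [sub_self] at this
  refine this.symm.trans ?_
  simp only [pderivU, update_eq_add_single]
  refine congrArg (fun h : ℝ → ℝ => deriv h (p.2 J)) (funext fun t => congrArg f.1 ?_)
  ext <;> simp

/-- The base coordinate `x^i` as a local function. -/
def xc {N : ℕ} (i : Fin N) : Loc N :=
  ⟨fun p => p.1 i, isLocal_comp_proj ∅ (g := fun y => y.1 i) (by fun_prop)⟩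

/-- The jet coordinate `u_J` as a local function. -/
def uc {N : ℕ} (J : MI N) : Loc N :=
  ⟨fun p => p.2 J, isLocal_comp_proj {J} (g := fun y => y.2 ⟨J, by simp⟩) (by fun_prop)⟩

lemma dirD_xc {N : ℕ} (v : JetPt N) (i : Fin N) :
    dirD v (xc i) = algebraMap ℝ (Loc N) (v.1 i) := by
  refine Subtype.ext (funext fun p => ?_)
  have : HasDerivAt (fun t : ℝ => p.1 i + t * v.1 i) (v.1 i) 0 := by
    simpa using ((hasDerivAt_id (0 : ℝ)).mul_const (v.1 i)).const_add (p.1 i)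
  exact this.deriv

lemma dirD_uc {N : ℕ} (v : JetPt N) (J : MI N) :
    dirD v (uc J) = algebraMap ℝ (Loc N) (v.2 J) := by
  refine Subtype.ext (funext fun p => ?_)
  have : HasDerivAt (fun t : ℝ => p.2 J + t * v.2 J) (v.2 J) 0 := by
    simpa using ((hasDerivAt_id (0 : ℝ)).mul_const (v.2 J)).const_add (p.2 J)
  exact this.deriv

lemma XD_xc {N : ℕ} (i j : Fin N) : XD i (xc j) = if i = j then 1 else 0 := by
  rw [XD, dirD_xc]; split_ifs with h
  · subst h; simp
  · simp [Ne.symm h]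

lemma XD_uc {N : ℕ} (i : Fin N) (J : MI N) : XD i (uc J) = 0 := by
  rw [XD, dirD_uc]; simp

lemma UD_xc {N : ℕ} (J : MI N) (i : Fin N) : UD J (xc i) = 0 := by
  rw [UD, dirD_xc]; simp

lemma UD_uc {N : ℕ} (J K : MI N) : UD J (uc K) = if J = K then 1 else 0 := by
  rw [UD, dirD_uc]; split_ifs with h
  · subst h; simp
  · simp [Ne.symm h]

/-- A local function depends on finitely many jet coordinates. -/
lemma exists_UD_eq_zero {N : ℕ} (f : Loc N) : ∃ S : Finset (MI N), ∀ J ∉ S, UD J f = 0 := by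
  obtain ⟨S, g, hg, hf⟩ := f.2.exists_proj
  refine ⟨S, fun J hJ => Subtype.ext ?_⟩
  change dir _ f.1 = 0
  rw [hf, dir_comp_proj _ hg]
  have : proj S ((0, Pi.single J 1) : JetPt N) = 0 := by
    refine Prod.ext rfl (funext fun K => ?_)
    have hK : K.1 ≠ J := fun h => hJ (h ▸ K.2)
    simp [proj, Pi.single_apply, hK]
  funext p
  simp [this]

/-! ### Total derivatives and their commutation relations -/

lemma coe_TD_aux {N : ℕ} (i : Fin N) (f : Loc N) {S : Finset (MI N)}
    (hS : ∀ J ∉ S, UD J f = 0) :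
    Dtot i f.1 = ((XD i f + ∑ J ∈ S, uc (inc i J) * UD J f : Loc N) : Fn N) := by
  funext p
  have h0 : ∀ J ∉ S, p.2 (inc i J) * pderivU J f.1 p = 0 := by
    intro J hJ
    rw [← coe_UD, hS J hJ]; simp
  simp only [Dtot]
  rw [tsum_eq_sum h0, ← coe_XD]
  simp only [← coe_UD]
  simp [Finset.sum_apply]
  rfl

/-- The total derivative `d/dx^i` as a derivation of the algebra of local functions. -/
noncomputable def TD {N : ℕ} (i : Fin N) : Derivation ℝ (Loc N) (Loc N) := by
  classical
  have aux : ∀ f : Loc N, ∃ h : IsLocal (Dtot i f.1), ∀ S : Finset (MI N),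
      (∀ J ∉ S, UD J f = 0) →
        (⟨Dtot i f.1, h⟩ : Loc N) = XD i f + ∑ J ∈ S, uc (inc i J) * UD J f := by
    intro f
    obtain ⟨S, hS⟩ := exists_UD_eq_zero f
    refine ⟨?_, fun T hT => Subtype.ext (coe_TD_aux i f hT)⟩
    rw [coe_TD_aux i f hS]
    exact Subtype.property _
  refine Derivation.mk'
    { toFun := fun f => ⟨Dtot i f.1, (aux f).1⟩
      map_add' := fun f g => ?_
      map_smul' := fun c f => ?_ } (fun f g => ?_)
  · obtain ⟨S, hS⟩ := exists_UD_eq_zero f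
    obtain ⟨T, hT⟩ := exists_UD_eq_zero g
    have h1 : ∀ J ∉ S ∪ T, UD J f = 0 := fun J hJ => hS J (by simp_all)
    have h2 : ∀ J ∉ S ∪ T, UD J g = 0 := fun J hJ => hT J (by simp_all)
    rw [(aux _).2 _ h1, (aux _).2 _ h2, (aux (f + g)).2 (S ∪ T) (fun J hJ => by
      rw [map_add, h1 J hJ, h2 J hJ, add_zero])]
    simp only [map_add, mul_add, Finset.sum_add_distrib]
    ring
  · obtain ⟨S, hS⟩ := exists_UD_eq_zero f
    rw [(aux _).2 _ hS, (aux (c • f)).2 S (fun J hJ => by rw [Derivation.map_smul, hS J hJ, smul_zero])]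
    simp only [Derivation.map_smul, RingHom.id_apply, smul_add, Finset.smul_sum, mul_smul_comm]
  · obtain ⟨S, hS⟩ := exists_UD_eq_zero f
    obtain ⟨T, hT⟩ := exists_UD_eq_zero g
    have h1 : ∀ J ∉ S ∪ T, UD J f = 0 := fun J hJ => hS J (by simp_all)
    have h2 : ∀ J ∉ S ∪ T, UD J g = 0 := fun J hJ => hT J (by simp_all)
    change (⟨Dtot i (f * g).1, (aux (f * g)).1⟩ : Loc N) =
      f • (⟨Dtot i g.1, (aux g).1⟩ : Loc N) + g • (⟨Dtot i f.1, (aux f).1⟩ : Loc N)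
    rw [(aux _).2 _ h1, (aux _).2 _ h2, (aux (f * g)).2 (S ∪ T) (fun J hJ => by
      rw [Derivation.leibniz, h1 J hJ, h2 J hJ, smul_zero, smul_zero, add_zero])]
    simp only [Derivation.leibniz, smul_eq_mul, mul_add, Finset.sum_add_distrib, Finset.mul_sum]
    have e1 : ∀ J : MI N, uc (inc i J) * (f * UD J g) = f * (uc (inc i J) * UD J g) :=
      fun J => by ring
    have e2 : ∀ J : MI N, uc (inc i J) * (g * UD J f) = g * (uc (inc i J) * UD J f) :=
      fun J => by ring
    simp only [e1, e2]
    ring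

lemma coe_TD {N : ℕ} (i : Fin N) (f : Loc N) : (TD i f : Fn N) = Dtot i f.1 := rfl

lemma TD_eq {N : ℕ} (i : Fin N) (f : Loc N) {S : Finset (MI N)} (hS : ∀ J ∉ S, UD J f = 0) :
    TD i f = XD i f + ∑ J ∈ S, uc (inc i J) * UD J f :=
  Subtype.ext (coe_TD_aux i f hS)

lemma TD_xc {N : ℕ} (i j : Fin N) : TD i (xc j) = if i = j then 1 else 0 := by
  rw [TD_eq i (xc j) (S := ∅) (fun J _ => UD_xc J j), XD_xc]; simp

lemma TD_uc {N : ℕ} (i : Fin N) (J : MI N) : TD i (uc J) = uc (inc i J) := by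
  classical
  rw [TD_eq i (uc J) (S := {J}) (fun K hK => by rw [UD_uc, if_neg (by simpa using hK)]), XD_uc]
  simp [UD_uc]

lemma inc_comm {N : ℕ} (i j : Fin N) (J : MI N) : inc i (inc j J) = inc j (inc i J) := by
  rcases eq_or_ne i j with rfl | h
  · rfl
  · funext k
    simp only [inc, Function.update_apply]
    split_ifs <;> simp_all

lemma UD_comm {N : ℕ} (J K : MI N) (f : Loc N) : UD J (UD K f) = UD K (UD J f) := dirD_comm _ _ f

lemma XD_UD_comm {N : ℕ} (i : Fin N) (K : MI N) (f : Loc N) :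
    XD i (UD K f) = UD K (XD i f) := dirD_comm _ _ f

lemma TD_comm {N : ℕ} (i j : Fin N) (f : Loc N) : TD i (TD j f) = TD j (TD i f) := by
  obtain ⟨S, hS⟩ := exists_UD_eq_zero f
  have key : ∀ i j : Fin N, TD i (TD j f) = XD i (XD j f) +
      (∑ J ∈ S, uc (inc i J) * XD j (UD J f)) + (∑ J ∈ S, uc (inc j J) * XD i (UD J f)) +
      (∑ J ∈ S, ∑ K ∈ S, uc (inc j J) * uc (inc i K) * UD K (UD J f)) +
      ∑ J ∈ S, uc (inc i (inc j J)) * UD J f := by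
    intro i j
    rw [TD_eq j f hS, map_add, map_sum,
      TD_eq i (XD j f) (S := S) (fun J hJ => by rw [← XD_UD_comm, hS J hJ, map_zero])]
    have : ∀ J ∈ S, TD i (uc (inc j J) * UD J f) = uc (inc j J) * XD i (UD J f) +
        ∑ K ∈ S, uc (inc j J) * uc (inc i K) * UD K (UD J f) +
        uc (inc i (inc j J)) * UD J f := by
      intro J _
      rw [Derivation.leibniz, TD_uc,
        TD_eq i (UD J f) (S := S) (fun K hK => by rw [UD_comm, hS K hK, map_zero])]
      simp only [smul_eq_mul, mul_add, Finset.mul_sum, mul_assoc]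
      ring
    rw [Finset.sum_congr rfl this]
    simp only [Finset.sum_add_distrib, ← XD_UD_comm]
    ring
  rw [key i j, key j i, Finset.sum_comm (s := S) (t := S),
    show XD i (XD j f) = XD j (XD i f) from dirD_comm _ _ f]
  simp only [inc_comm j i]
  have : ∀ x ∈ S, ∀ y ∈ S, uc (inc j y) * uc (inc i x) * UD x (UD y f) =
      uc (inc i x) * uc (inc j y) * UD y (UD x f) := by
    intro x _ y _
    rw [UD_comm x y, mul_comm (uc (inc j y))]
  rw [Finset.sum_congr rfl fun x hx => Finset.sum_congr rfl (this x hx)]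
  ring

/-- Commuting `∂/∂u_J` past `d/dx^i` produces the single term `∂/∂u_K` with `iK = J`, if there
is such a `K`. -/
lemma UD_TD {N : ℕ} (J : MI N) (i : Fin N) :
    (∀ K, J ≠ inc i K) ∧ (∀ f : Loc N, UD J (TD i f) = TD i (UD J f)) ∨
    ∃ K, J = inc i K ∧ ∀ f : Loc N, UD J (TD i f) = TD i (UD J f) + UD K f := by
  classical
  have key : ∀ f : Loc N, ∀ S : Finset (MI N), (∀ J ∉ S, UD J f = 0) →
      UD J (TD i f) = TD i (UD J f) + ∑ L ∈ S, (if J = inc i L then 1 else 0) * UD L f := by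
    intro f S hS
    rw [TD_eq i f hS, TD_eq i (UD J f) (S := S) (fun K hK => by rw [UD_comm, hS K hK, map_zero]),
      map_add, map_sum, XD_UD_comm, add_assoc, ← Finset.sum_add_distrib]
    congr 1
    refine Finset.sum_congr rfl fun L _ => ?_
    rw [Derivation.leibniz, UD_uc, UD_comm]
    simp only [smul_eq_mul]
    ring
  by_cases h : ∃ K, J = inc i K
  · obtain ⟨K, rfl⟩ := h
    refine Or.inr ⟨K, rfl, fun f => ?_⟩
    obtain ⟨S, hS⟩ := exists_UD_eq_zero f
    have hinj : ∀ L, inc i K = inc i L ↔ K = L := by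
      refine fun L => ⟨fun h => funext fun k => ?_, fun h => h ▸ rfl⟩
      have := congrFun h k
      simp only [inc, Function.update_apply] at this
      split_ifs at this with hk
      · subst hk; omega
      · exact this
    rw [key f (insert K S) (fun L hL => hS L (by simp_all))]
    simp [hinj]
  · push Not at h
    refine Or.inl ⟨h, fun f => ?_⟩
    obtain ⟨S, hS⟩ := exists_UD_eq_zero f
    rw [key f S hS]
    simp [h]

/-! ### Iterated derivatives -/

/-- A commuting family in a monoid factors through a commutative monoid. -/
lemma exists_commMonoid {M ι : Type*} [Monoid M] (φ : ι → M) (h : ∀ i j, φ i * φ j = φ j * φ i) :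
    ∃ (C : Submonoid M) (_ : IsMulCommutative C) (ψ : ι → C), ∀ i, (ψ i : M) = φ i :=
  ⟨Submonoid.closure (Set.range φ), Submonoid.isMulCommutative_closure _ (by
      rintro _ ⟨i, rfl⟩ _ ⟨j, rfl⟩; exact h i j),
    fun i => ⟨φ i, Submonoid.subset_closure ⟨i, rfl⟩⟩, fun _ => rfl⟩

/-- The space of local functions, as a type with its own ring structure. -/
def LF (N : ℕ) : Type := Loc N

noncomputable instance {N : ℕ} : CommRing (LF N) := inferInstanceAs (CommRing (Loc N))

noncomputable instance {N : ℕ} : Algebra ℝ (LF N) := inferInstanceAs (Algebra ℝ (Loc N))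

/-- The function on the jet space underlying a local function. -/
noncomputable def toFn {N : ℕ} : LF N →ₐ[ℝ] Fn N := (Loc N).val

lemma toFn_injective {N : ℕ} : Function.Injective (toFn (N := N)) := Subtype.val_injective

lemma isLocal_toFn {N : ℕ} (f : LF N) : IsLocal (toFn f) := f.2

/-- Linear endomorphisms of the space of local functions. -/
abbrev LEnd (N : ℕ) := Module.End ℝ (LF N)

/-- `d/dx^i` as a linear endomorphism. -/
noncomputable def De {N : ℕ} (i : Fin N) : LEnd N := (TD i).toLinearMap

/-- `∂/∂u_J` as a linear endomorphism. -/
noncomputable def Ue {N : ℕ} (J : MI N) : LEnd N := (UD J).toLinearMap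

/-- The coordinate function `x^i`. -/
noncomputable def xf {N : ℕ} (i : Fin N) : LF N := xc i

lemma toFn_De {N : ℕ} (i : Fin N) (f : LF N) : toFn (De i f) = Dtot i (toFn f) := rfl

lemma De_mul {N : ℕ} (i : Fin N) (f g : LF N) : De i (f * g) = f * De i g + De i f * g := by
  rw [mul_comm (De i f)]; exact (TD i).leibniz f g

lemma Ue_mul {N : ℕ} (J : MI N) (f g : LF N) : Ue J (f * g) = f * Ue J g + Ue J f * g := by
  rw [mul_comm (Ue J f)]; exact (UD J).leibniz f g

lemma De_xf {N : ℕ} (i j : Fin N) : De i (xf j) = if i = j then 1 else 0 := TD_xc i j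

lemma Ue_xf {N : ℕ} (J : MI N) (j : Fin N) : Ue J (xf j) = 0 := UD_xc J j

lemma De_comm {N : ℕ} (i j : Fin N) : De i * De j = De j * De i := LinearMap.ext (TD_comm i j)

lemma Ue_comm {N : ℕ} (J K : MI N) : Ue J * Ue K = Ue K * Ue J := LinearMap.ext (UD_comm J K)

lemma Ue_De {N : ℕ} (J : MI N) (i : Fin N) :
    Ue J * De i - De i * Ue J = 0 ∨ ∃ K, J = inc i K ∧ Ue J * De i - De i * Ue J = Ue K := by
  rcases UD_TD J i with ⟨_, h⟩ | ⟨K, rfl, h⟩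
  · exact Or.inl (LinearMap.ext fun f => sub_eq_zero.mpr (h f))
  · exact Or.inr ⟨K, rfl, LinearMap.ext fun f => sub_eq_of_eq_add' (h f)⟩

lemma exists_Ue_eq_zero {N : ℕ} (f : LF N) : ∃ S : Finset (MI N), ∀ J ∉ S, Ue J f = 0 :=
  exists_UD_eq_zero f

/-- `(d/dx)^I` as a linear endomorphism. -/
noncomputable def Dp {N : ℕ} (I : MI N) : LEnd N :=
  ((List.finRange N).map fun i => De i ^ I i).prod

/-- `(∂/∂u)^α` as a linear endomorphism. -/
noncomputable def Up {N : ℕ} (α : MI N →₀ ℕ) : LEnd N :=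
  (α.support.toList.map fun J => Ue J ^ α J).prod

lemma toFn_pow {N : ℕ} {T : LEnd N} {t : Fn N → Fn N} (h : ∀ f, toFn (T f) = t (toFn f)) (k : ℕ)
    (f : LF N) : toFn ((T ^ k) f) = t^[k] (toFn f) := by
  induction k with
  | zero => rfl
  | succ k ih => rw [pow_succ', Module.End.mul_apply, h, ih, Function.iterate_succ_apply']

lemma toFn_listProd {N : ℕ} {ι : Type*} {T : ι → LEnd N} {t : ι → Fn N → Fn N}
    (h : ∀ i f, toFn (T i f) = t i (toFn f)) (k : ι → ℕ) (l : List ι) (f : LF N) :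
    toFn ((l.map fun i => T i ^ k i).prod f) =
      l.foldr (fun i g => (t i)^[k i] ∘ g) id (toFn f) := by
  induction l with
  | nil => rfl
  | cons i l ih =>
    rw [List.map_cons, List.prod_cons, Module.End.mul_apply, toFn_pow (h i), ih]; rfl

lemma toFn_Dp {N : ℕ} (I : MI N) (f : LF N) : toFn (Dp I f) = DPow I (toFn f) :=
  toFn_listProd (T := De) (t := Dtot) (fun _ _ => rfl) _ _ f

lemma toFn_Up {N : ℕ} (α : MI N →₀ ℕ) (f : LF N) : toFn (Up α f) = UPow α (toFn f) :=
  toFn_listProd (T := Ue) (t := pderivU) (fun J f => coe_UD J f) _ _ f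

lemma Dp_zero {N : ℕ} : Dp (0 : MI N) = 1 := by simp [Dp]

lemma Up_zero {N : ℕ} : Up (0 : MI N →₀ ℕ) = 1 := by simp [Up]

open scoped IsMulCommutative in
lemma Dp_inc {N : ℕ} (i : Fin N) (I : MI N) : Dp (inc i I) = De i * Dp I := by
  obtain ⟨C, _, ψ, hψ⟩ := exists_commMonoid (De (N := N)) De_comm
  have h : ∀ I : MI N, Dp I = ((∏ i, ψ i ^ I i : C) : LEnd N) := by
    intro I
    rw [Fin.prod_univ_def, Submonoid.coe_list_prod, List.map_map, Dp]
    simp [Function.comp_def, hψ]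
  rw [h, h, ← hψ i, ← Submonoid.coe_mul]
  congr 1
  have : ∀ j, ψ j ^ inc i I j = (if j = i then ψ j else 1) * ψ j ^ I j := by
    intro j
    rcases eq_or_ne j i with rfl | hj
    · simp [inc, pow_succ']
    · simp [inc, hj]
  simp only [this, Finset.prod_mul_distrib]
  simp

open scoped IsMulCommutative in
lemma Up_add_single {N : ℕ} (α : MI N →₀ ℕ) (J : MI N) :
    Up (Finsupp.single J 1 + α) = Ue J * Up α := by
  classical
  obtain ⟨C, _, ψ, hψ⟩ := exists_commMonoid (Ue (N := N)) Ue_comm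
  have h : ∀ α : MI N →₀ ℕ, Up α = ((α.prod fun J k => ψ J ^ k : C) : LEnd N) := by
    intro α
    rw [Finsupp.prod, ← Finset.prod_map_toList, Submonoid.coe_list_prod, List.map_map, Up]
    simp [Function.comp_def, hψ]
  rw [h, h, ← hψ J, ← Submonoid.coe_mul]
  congr 1
  rw [Finsupp.prod_add_index' (by simp) (by intros; rw [pow_add])]
  simp

/-- Every multi-index is reached from `0` by increments. -/
lemma MI_induction {N : ℕ} {P : MI N → Prop} (h0 : P 0) (hs : ∀ i I, P I → P (inc i I))
    (I : MI N) : P I := by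
  induction hk : ∑ i, I i generalizing I with
  | zero =>
    have : I = 0 := funext fun i => by
      have := (Finset.sum_eq_zero_iff.mp hk) i (Finset.mem_univ i); exact this
    exact this ▸ h0
  | succ k ih =>
    obtain ⟨i, hi⟩ : ∃ i, I i ≠ 0 := by
      by_contra! h
      simp [h] at hk
    have e : I = inc i (Function.update I i (I i - 1)) := by
      funext j
      rcases eq_or_ne j i with rfl | hj
      · simp [inc]; omega
      · simp [inc, hj]
    rw [e]
    refine hs _ _ (ih _ ?_)
    rw [Finset.sum_update_of_mem (Finset.mem_univ i)]
    rw [← Finset.add_sum_erase _ _ (Finset.mem_univ i)] at hk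
    rw [← Finset.erase_eq]
    omega

lemma sum_inc {N : ℕ} (i : Fin N) (I : MI N) : ∑ k, inc i I k = ∑ k, I k + 1 := by
  rw [inc, Finset.sum_update_of_mem (Finset.mem_univ i), ← Finset.add_sum_erase _ I (Finset.mem_univ i),
    ← Finset.erase_eq]
  omega

lemma degf_add {N : ℕ} (α β : MI N →₀ ℕ) : degf (α + β) = max (degf α) (degf β) := by
  classical
  have : (α + β).support = α.support ∪ β.support := by
    ext J; simp; omega
  rw [degf, this, Finset.sup_union]; rfl

lemma degf_single {N : ℕ} (J : MI N) : degf (Finsupp.single J 1) = ∑ i, J i := by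
  rw [degf, Finsupp.support_single _ one_ne_zero, Finset.sup_singleton]

/-- Every exponent is reached from `0` by adding unit exponents. -/
lemma exponent_induction {N : ℕ} {P : (MI N →₀ ℕ) → Prop} (h0 : P 0)
    (hs : ∀ J α, P α → P (Finsupp.single J 1 + α)) (α : MI N →₀ ℕ) : P α := by
  induction α using Finsupp.induction with
  | zero => exact h0
  | single_add J b f _ _ ih =>
    clear * - ih hs
    induction b with
    | zero => simpa using ih
    | succ b ih =>
      rw [add_comm b 1, Finsupp.single_add, add_assoc]
      exact hs _ _ ih

/-- The commutator of `(∂/∂u)^α` with `d/dx^i` is a combination of operators `(∂/∂u)^β` whose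
differential degree is at least that of `α` minus one. -/
lemma Up_De_mem {N : ℕ} (i : Fin N) (α : MI N →₀ ℕ) :
    Up α * De i - De i * Up α ∈
      Submodule.span ℝ {T : LEnd N | ∃ β, degf α ≤ degf β + 1 ∧ T = Up β} := by
  induction α using exponent_induction with
  | h0 => rw [Up_zero, one_mul, mul_one, sub_self]; exact zero_mem _
  | hs J α ih =>
    have e : Up (Finsupp.single J 1 + α) * De i - De i * Up (Finsupp.single J 1 + α) =
        Ue J * (Up α * De i - De i * Up α) + (Ue J * De i - De i * Ue J) * Up α := by
      rw [Up_add_single]; simp only [mul_sub, sub_mul, mul_assoc]; abel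
    rw [e]
    refine add_mem ?_ ?_
    · have : (Submodule.span ℝ {T : LEnd N | ∃ β, degf α ≤ degf β + 1 ∧ T = Up β}) ≤
          (Submodule.span ℝ {T : LEnd N | ∃ β, degf (Finsupp.single J 1 + α) ≤ degf β + 1 ∧
            T = Up β}).comap (LinearMap.mulLeft ℝ (Ue J)) := by
        rw [Submodule.span_le]
        rintro _ ⟨β, hβ, rfl⟩
        refine Submodule.subset_span ⟨Finsupp.single J 1 + β, ?_, (Up_add_single _ _).symm⟩
        rw [degf_add, degf_add]; omega
      exact this ih
    · rcases Ue_De J i with h | ⟨K, rfl, h⟩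
      · rw [h, zero_mul]; exact zero_mem _
      · rw [h, ← Up_add_single]
        refine Submodule.subset_span ⟨_, ?_, rfl⟩
        rw [degf_add, degf_add, degf_single, degf_single, sum_inc]; omega

/-! ### Koszul exactness over the Weyl algebra -/

lemma pos_update {N : ℕ} (i j : Fin N) (δ : Fin N → Bool) (b : Bool) :
    pos j (Function.update δ i b) + (if i < j ∧ δ i then 1 else 0) =
      pos j δ + (if i < j ∧ b then 1 else 0) := by
  unfold pos
  rw [← Finset.add_sum_erase _ _ (Finset.mem_univ i), ← Finset.add_sum_erase _ (fun l => if l < j ∧ δ l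
    then 1 else 0) (Finset.mem_univ i), Function.update_self]
  have : ∑ l ∈ Finset.univ.erase i, (if l < j ∧ Function.update δ i b l then 1 else 0) =
      ∑ l ∈ Finset.univ.erase i, if l < j ∧ δ l then 1 else 0 :=
    Finset.sum_congr rfl fun l hl => by
      rw [Function.update_of_ne (Finset.ne_of_mem_erase hl)]
  omega

lemma pos_update_self {N : ℕ} (i : Fin N) (δ : Fin N → Bool) (b : Bool) :
    pos i (Function.update δ i b) = pos i δ := by
  have := pos_update i i δ b
  simpa using this

lemma wt_update {N : ℕ} (i : Fin N) (δ : Fin N → Bool) (b : Bool) :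
    wt (Function.update δ i b) + (if δ i then 1 else 0) = wt δ + (if b then 1 else 0) := by
  unfold wt
  rw [← Finset.add_sum_erase _ _ (Finset.mem_univ i), ← Finset.add_sum_erase _ (fun l => if δ l
    then 1 else 0) (Finset.mem_univ i), Function.update_self]
  have : ∑ l ∈ Finset.univ.erase i, (if Function.update δ i b l then 1 else 0) =
      ∑ l ∈ Finset.univ.erase i, if δ l then 1 else 0 :=
    Finset.sum_congr rfl fun l hl => by
      rw [Function.update_of_ne (Finset.ne_of_mem_erase hl)]
  omega

lemma wt_compl {N : ℕ} (δ : Fin N → Bool) : (∑ i, if δ i then 0 else 1) + wt δ = N := by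
  unfold wt
  rw [← Finset.sum_add_distrib]
  have : ∀ i, ((if δ i then 0 else 1) + if δ i then 1 else 0) = 1 := fun i => by split <;> rfl
  simp [this]

/-- The signs picked up by removing `i` and adding `j` in the two possible orders are opposite. -/
lemma sign_cross {N : ℕ} {i j : Fin N} (hij : i ≠ j) {δ : Fin N → Bool} (hi : δ i = true)
    (hj : δ j = false) :
    (-1 : ℝ) ^ pos i δ * (-1) ^ pos j (Function.update δ i false) =
      -((-1) ^ pos j δ * (-1) ^ pos i (Function.update δ j true)) := by
  have h1 := pos_update i j δ false
  have h2 := pos_update j i δ true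
  rw [← pow_add, ← pow_add, ← neg_one_mul (_ ^ (pos j δ + _)), ← pow_succ']
  simp only [hi, hj, Bool.false_eq_true, and_true, and_false, if_false, add_zero] at h1 h2
  refine (neg_one_pow_congr ?_)
  rcases lt_or_gt_of_ne hij with h | h
  · rw [if_pos h] at h1; rw [if_neg h.asymm] at h2
    simp only [Nat.even_iff]; omega
  · rw [if_neg h.asymm] at h1; rw [if_pos h] at h2
    simp only [Nat.even_iff]; omega

section Weyl

variable {N : ℕ} {V : Type*} [AddCommGroup V] [Module ℝ V]

/-- The de Rham type differential built from operators `D i`. -/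
noncomputable def dV (D : Fin N → Module.End ℝ V) (ω : (Fin N → Bool) → V) : (Fin N → Bool) → V :=
  fun δ => ∑ i, if δ i then (-1 : ℝ) ^ pos i δ • D i (ω (Function.update δ i false)) else 0

/-- The Koszul type contraction built from operators `X j`. -/
noncomputable def kV (X : Fin N → Module.End ℝ V) (ω : (Fin N → Bool) → V) : (Fin N → Bool) → V :=
  fun δ => ∑ j, if δ j then 0 else (-1 : ℝ) ^ pos j δ • X j (ω (Function.update δ j true))

/-- The Euler operator `∑ D i ∘ X i`. -/
noncomputable def eV (D X : Fin N → Module.End ℝ V) : Module.End ℝ V := ∑ i, D i * X i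

lemma eV_apply (D X : Fin N → Module.End ℝ V) (v : V) : eV D X v = ∑ i, D i (X i v) := by
  simp [eV]

/-- Cartan type homotopy formula `dK + Kd = E + (N - weight)`. -/
lemma homotopy {D X : Fin N → Module.End ℝ V}
    (hXD : ∀ i j v, X j (D i v) = D i (X j v) + if i = j then v else 0)
    (ω : (Fin N → Bool) → V) (δ : Fin N → Bool) :
    dV D (kV X ω) δ + kV X (dV D ω) δ = eV D X (ω δ) + (N - wt δ : ℝ) • ω δ := by
  have hN : (N - wt δ : ℝ) • ω δ = ∑ i, if δ i then 0 else ω δ := by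
    have h : (N - wt δ : ℝ) = ∑ i, if δ i then (0 : ℝ) else 1 := by
      rw [sub_eq_iff_eq_add]
      have := congrArg (Nat.cast (R := ℝ)) (wt_compl δ)
      push_cast at this
      exact this.symm
    rw [h, Finset.sum_smul]
    exact Finset.sum_congr rfl fun i _ => by split <;> simp
  rw [eV_apply, hN, ← Finset.sum_add_distrib]
  let A : Fin N → Fin N → V := fun i j => if δ i then (-1 : ℝ) ^ pos i δ • D i
    (if Function.update δ i false j then 0 else (-1 : ℝ) ^ pos j (Function.update δ i false) •
      X j (ω (Function.update (Function.update δ i false) j true))) else 0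
  let B : Fin N → Fin N → V := fun i j => if δ j then 0 else (-1 : ℝ) ^ pos j δ • X j
    (if Function.update δ j true i then (-1 : ℝ) ^ pos i (Function.update δ j true) •
      D i (ω (Function.update (Function.update δ j true) i false)) else 0)
  have hA : dV D (kV X ω) δ = ∑ i, ∑ j, A i j := by
    refine Finset.sum_congr rfl fun i _ => ?_
    by_cases hi : δ i = true
    · simp only [A, kV, hi, if_true, map_sum, Finset.smul_sum]
    · simp [A, hi]
  have hB : kV X (dV D ω) δ = ∑ i, ∑ j, B i j := by
    rw [Finset.sum_comm]
    refine Finset.sum_congr rfl fun j _ => ?_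
    by_cases hj : δ j = true
    · simp [B, hj]
    · simp only [B, dV, hj, map_sum, Finset.smul_sum]; rfl
  have hAB : ∀ i j, A i j + B i j =
      if i = j then D i (X i (ω δ)) + (if δ i then 0 else ω δ) else 0 := by
    intro i j
    have sq : ∀ k, ((-1 : ℝ) ^ k * (-1) ^ k) = 1 := fun k => by rw [← mul_pow]; simp
    rcases eq_or_ne i j with rfl | hij
    · rcases hi : δ i with _ | _
      · have e : Function.update δ i false = δ := by rw [← hi, Function.update_eq_self]
        simp [A, B, hi, pos_update_self, smul_smul, sq, hXD, e]
      · have e : Function.update δ i true = δ := by rw [← hi, Function.update_eq_self]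
        simp [A, B, hi, pos_update_self, smul_smul, sq, e]
    · rcases hi : δ i with _ | _
      · simp [A, B, hi, hij]
      · rcases hj : δ j with _ | _
        · simp only [A, B, hi, hj, hij, hij.symm, if_true, if_false, Function.update_of_ne, ne_eq,
            not_false_eq_true, map_smul, smul_smul, Bool.false_eq_true, hXD, add_zero,
            sign_cross hij hi hj]
          rw [Function.update_comm hij.symm, ← add_smul]
          simp
        · simp [A, B, hi, hj, hij, hij.symm]
  rw [hA, hB, ← Finset.sum_add_distrib]
  refine Finset.sum_congr rfl fun i _ => ?_
  rw [← Finset.sum_add_distrib]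
  simp only [hAB, Finset.sum_ite_eq, Finset.mem_univ, if_true]

/-- A closed form of weight `w < N` with coefficients in a space `G` on which the operators
`E + a`, `a > 0`, are invertible is exact. -/
lemma weyl_exact {D X : Fin N → Module.End ℝ V}
    (hDD : ∀ i j v, D i (D j v) = D j (D i v)) (hXX : ∀ i j v, X i (X j v) = X j (X i v))
    (hXD : ∀ i j v, X j (D i v) = D i (X j v) + if i = j then v else 0)
    {G : Submodule ℝ V} (hD : ∀ i, ∀ v ∈ G, D i v ∈ G) (hX : ∀ i, ∀ v ∈ G, X i v ∈ G)
    (surj : ∀ a : ℝ, 0 < a → ∀ v ∈ G, ∃ v' ∈ G, eV D X v' + a • v' = v)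
    (inj : ∀ a : ℝ, 0 < a → ∀ v ∈ G, eV D X v + a • v = 0 → v = 0)
    {w : ℕ} (hw : w < N) {ω : (Fin N → Bool) → V} (hG : ∀ δ, ω δ ∈ G)
    (hs : ∀ δ, wt δ ≠ w → ω δ = 0) (hd : ∀ δ, dV D ω δ = 0) :
    ∃ η : (Fin N → Bool) → V, (∀ δ, η δ ∈ G) ∧ (∀ δ, wt δ + 1 ≠ w → η δ = 0) ∧
      ∀ δ, dV D η δ = ω δ := by
  have ha : (0 : ℝ) < N - w := sub_pos.mpr (by exact_mod_cast hw)
  set a : ℝ := N - w with ha'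
  have : ∀ δ, ∃ z ∈ G, eV D X z + a • z = ω δ ∧ (wt δ ≠ w → z = 0) := by
    intro δ
    by_cases h : wt δ = w
    · obtain ⟨z, hz, e⟩ := surj a ha _ (hG δ)
      exact ⟨z, hz, e, fun h' => absurd h h'⟩
    · exact ⟨0, zero_mem _, by simp [hs δ h], fun _ => rfl⟩
  choose ζ hζG hζ hζ0 using this
  have hED : ∀ i v, D i (eV D X v) = eV D X (D i v) - D i v := by
    intro i v
    have : ∀ j, D j (X j (D i v)) = D i (D j (X j v)) + if i = j then D j v else 0 := by
      intro j
      rw [hXD, map_add, hDD]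
      split <;> simp
    simp only [eV_apply, this, Finset.sum_add_distrib, map_sum, Finset.sum_ite_eq, Finset.mem_univ,
      if_true, add_sub_cancel_right]
  have hEX : ∀ i v, X i (eV D X v) = eV D X (X i v) + X i v := by
    intro i v
    have : ∀ j, X i (D j (X j v)) = D j (X j (X i v)) + if j = i then X j v else 0 := by
      intro j
      rw [hXD, hXX]
    simp only [eV_apply, this, Finset.sum_add_distrib, map_sum, Finset.sum_ite_eq', Finset.mem_univ,
      if_true]
  have hGs : ∀ (p : ℕ) (v : V), v ∈ G → (-1 : ℝ) ^ p • v ∈ G := fun p v => G.smul_mem _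
  have hdG : ∀ θ : (Fin N → Bool) → V, (∀ δ, θ δ ∈ G) → ∀ δ, dV D θ δ ∈ G := fun θ h δ =>
    sum_mem fun i _ => by
      split
      · exact hGs _ _ (hD _ _ (h _))
      · exact zero_mem _
  have hkG : ∀ θ : (Fin N → Bool) → V, (∀ δ, θ δ ∈ G) → ∀ δ, kV X θ δ ∈ G := fun θ h δ =>
    sum_mem fun i _ => by
      split
      · exact zero_mem _
      · exact hGs _ _ (hX _ _ (h _))
  have hdE : ∀ δ, eV D X (dV D ζ δ) + (a - 1) • dV D ζ δ = 0 := by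
    intro δ
    rw [← hd δ]
    simp only [dV, map_sum, Finset.smul_sum, ← Finset.sum_add_distrib]
    refine Finset.sum_congr rfl fun i _ => ?_
    split
    · rw [← hζ, map_add, hED, map_smul, map_smul, smul_comm (a - 1), ← smul_add, sub_smul, one_smul]
      congr 1; abel
    · simp
  have hkd : ∀ δ, kV X (dV D ζ) δ = 0 := by
    intro δ
    refine inj a ha _ (hkG _ (hdG _ hζG) δ) ?_
    simp only [kV, map_sum, Finset.smul_sum, ← Finset.sum_add_distrib]
    refine Finset.sum_eq_zero fun i _ => ?_
    split
    · simp
    · have := congrArg (X i) (hdE (Function.update δ i true))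
      rw [map_add, hEX, map_smul, map_zero, sub_smul, one_smul, add_add_sub_cancel] at this
      rw [map_smul, smul_comm a, ← smul_add, this, smul_zero]
  refine ⟨kV X ζ, hkG _ hζG, fun δ hδ => ?_, fun δ => ?_⟩
  · refine Finset.sum_eq_zero fun i _ => ?_
    split
    · rfl
    · next h =>
      rw [hζ0 _ ?_, map_zero, smul_zero]
      have := wt_update i δ true
      simp only [h, if_true] at this
      have : wt (Function.update δ i true) = wt δ + 1 := by simpa using this
      rw [this]; exact hδ
  · have := homotopy hXD ζ δ
    rw [hkd, add_zero] at this
    rw [this]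
    by_cases h : wt δ = w
    · rw [h]; exact hζ δ
    · rw [hζ0 δ h, hs δ h]; simp

end Weyl

/-! ### Total differential operators with coefficients -/

/-- Multiplication by a local function. -/
noncomputable def Mu {N : ℕ} (c : LF N) : LEnd N := LinearMap.mulLeft ℝ c

lemma Mu_apply {N : ℕ} (c f : LF N) : Mu c f = c * f := rfl

lemma Mu_mul {N : ℕ} (c d : LF N) : Mu (c * d) = Mu c * Mu d :=
  LinearMap.ext fun f => mul_assoc c d f

lemma Mu_one {N : ℕ} : Mu (1 : LF N) = 1 := LinearMap.ext fun f => one_mul f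

lemma Mu_comm {N : ℕ} (c d : LF N) : Mu c * Mu d = Mu d * Mu c := by
  rw [← Mu_mul, ← Mu_mul, mul_comm]

lemma De_Mu {N : ℕ} (i : Fin N) (c : LF N) : De i * Mu c = Mu c * De i + Mu (De i c) :=
  LinearMap.ext fun f => De_mul i c f

lemma De_Mu_xf {N : ℕ} (i j : Fin N) :
    De i * Mu (xf j) = Mu (xf j) * De i + if i = j then 1 else 0 := by
  rw [De_Mu, De_xf]
  split
  · rw [Mu_one]
  · congr 1; exact LinearMap.ext fun f => zero_mul f

/-- Operators `∑ (d/dx)^I ∘ c_I` on local functions. -/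
noncomputable def TDO (N : ℕ) : Submodule ℝ (LEnd N) :=
  Submodule.span ℝ {T | ∃ I c, T = Dp I * Mu c}

lemma Dp_Mu_mem {N : ℕ} (I : MI N) (c : LF N) : Dp I * Mu c ∈ TDO N :=
  Submodule.subset_span ⟨I, c, rfl⟩

/-- A linear map carries a span into a submodule once it does so on generators. -/
lemma span_map_mem {M M' : Type*} [AddCommGroup M] [Module ℝ M] [AddCommGroup M'] [Module ℝ M']
    {s : Set M} {P : Submodule ℝ M'} (φ : M →ₗ[ℝ] M') (h : ∀ x ∈ s, φ x ∈ P) {x : M}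
    (hx : x ∈ Submodule.span ℝ s) : φ x ∈ P :=
  (Submodule.span_le (p := P.comap φ)).mpr h hx

lemma De_mul_mem {N : ℕ} (i : Fin N) {T : LEnd N} (hT : T ∈ TDO N) : De i * T ∈ TDO N := by
  refine span_map_mem (LinearMap.mulLeft ℝ (De i)) ?_ hT
  rintro _ ⟨I, c, rfl⟩
  rw [LinearMap.mulLeft_apply, ← mul_assoc, ← Dp_inc]
  exact Dp_Mu_mem _ _

lemma mul_Mu_mem {N : ℕ} (d : LF N) {T : LEnd N} (hT : T ∈ TDO N) : T * Mu d ∈ TDO N := by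
  refine span_map_mem (LinearMap.mulRight ℝ (Mu d)) ?_ hT
  rintro _ ⟨I, c, rfl⟩
  rw [LinearMap.mulRight_apply, mul_assoc, ← Mu_mul]
  exact Dp_Mu_mem _ _

lemma mul_De_mem {N : ℕ} (i : Fin N) {T : LEnd N} (hT : T ∈ TDO N) : T * De i ∈ TDO N := by
  refine span_map_mem (LinearMap.mulRight ℝ (De i)) ?_ hT
  rintro _ ⟨I, c, rfl⟩
  have e : Dp I * De i = De i * Dp I := by
    induction I using MI_induction with
    | h0 => rw [Dp_zero, one_mul, mul_one]
    | hs j I ih => rw [Dp_inc, mul_assoc, ih, ← mul_assoc, De_comm, mul_assoc]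
  have : Dp I * Mu c * De i = Dp (inc i I) * Mu c - Dp I * Mu (De i c) := by
    rw [Dp_inc, ← e, mul_assoc, mul_assoc, De_Mu, mul_add, add_sub_cancel_right]
  rw [LinearMap.mulRight_apply, this]
  exact sub_mem (Dp_Mu_mem _ _) (Dp_Mu_mem _ _)

lemma Mu_mul_mem {N : ℕ} (d : LF N) {T : LEnd N} (hT : T ∈ TDO N) : Mu d * T ∈ TDO N := by
  refine span_map_mem (LinearMap.mulLeft ℝ (Mu d)) ?_ hT
  rintro _ ⟨I, c, rfl⟩
  rw [LinearMap.mulLeft_apply]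
  induction I using MI_induction generalizing d with
  | h0 =>
    rw [Dp_zero, one_mul, ← Mu_mul]
    have := Dp_Mu_mem (0 : MI N) (d * c)
    rwa [Dp_zero, one_mul] at this
  | hs j I ih =>
    have : Mu d * (Dp (inc j I) * Mu c) = De j * (Mu d * (Dp I * Mu c)) -
        Mu (De j d) * (Dp I * Mu c) := by
      rw [← mul_assoc (De j), De_Mu, add_mul, Dp_inc, add_sub_cancel_right]
      simp only [mul_assoc]
    rw [this]
    exact sub_mem (De_mul_mem _ (ih d)) (ih _)

/-- Coefficients can be moved to the left of the total derivatives. -/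
lemma TDO_le {N : ℕ} : TDO N ≤ Submodule.span ℝ {T | ∃ q I, T = Mu q * Dp I} := by
  rw [TDO, Submodule.span_le]
  rintro _ ⟨I, c, rfl⟩
  induction I using MI_induction with
  | h0 =>
    refine Submodule.subset_span ⟨c, 0, ?_⟩
    rw [Dp_zero, one_mul, mul_one]
  | hs j I ih =>
    rw [Dp_inc, mul_assoc]
    refine span_map_mem (LinearMap.mulLeft ℝ (De j)) ?_ ih
    rintro _ ⟨q, I, rfl⟩
    rw [LinearMap.mulLeft_apply, ← mul_assoc, De_Mu, add_mul, mul_assoc, ← Dp_inc]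
    exact add_mem (Submodule.subset_span ⟨_, _, rfl⟩) (Submodule.subset_span ⟨_, _, rfl⟩)

/-! ### Multidifferential operators and their filtration -/

/-- Arbitrary functions of `n` local functions with values in local functions. -/
abbrev VV (N n : ℕ) := (Fin n → LF N) → LF N

/-- Postcomposition with an endomorphism of local functions. -/
noncomputable def Lt {N n : ℕ} (T : LEnd N) : Module.End ℝ (VV N n) :=
  LinearMap.compLeft T (Fin n → LF N)

lemma Lt_apply {N n : ℕ} (T : LEnd N) (A : VV N n) (f : Fin n → LF N) : Lt T A f = T (A f) := rfl

lemma Lt_mul {N n : ℕ} (S T : LEnd N) (A : VV N n) : Lt (S * T) A = Lt S (Lt T A) := rfl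

lemma Lt_add {N n : ℕ} (S T : LEnd N) (A : VV N n) : Lt (S + T) A = Lt S A + Lt T A := rfl

lemma Lt_sub {N n : ℕ} (S T : LEnd N) (A : VV N n) : Lt (S - T) A = Lt S A - Lt T A := rfl

/-- `T ↦ T ∘ A` as a linear map. -/
noncomputable def LtA {N n : ℕ} (A : VV N n) : LEnd N →ₗ[ℝ] VV N n where
  toFun T := Lt T A
  map_add' _ _ := rfl
  map_smul' _ _ := rfl

lemma LtA_apply {N n : ℕ} (T : LEnd N) (A : VV N n) : LtA A T = Lt T A := rfl

/-- The operator applied to the `l`-th argument in the basic multidifferential operator of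
index `b`: total derivatives act on all arguments but the first. -/
noncomputable def tb {N n : ℕ} [NeZero n] (b : Idx N n) (l : Fin n) : LEnd N :=
  if l = 0 then Up (b.2 l) else Dp (b.1 l) * Up (b.2 l)

/-- Basic multidifferential operators `∂^{α_1}f_1 ∏_{l ≥ 2} (d/dx)^{I_l} ∂^{α_l}f_l`. -/
noncomputable def Bf {N n : ℕ} [NeZero n] (b : Idx N n) : VV N n := fun f => ∏ l, tb b l (f l)

/-- The total differential degree of an index. -/
def dg {N n : ℕ} (b : Idx N n) : ℕ := ∑ j, degf (b.2 j)

/-- Finite combinations of operators of differential degree at least `m`. -/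
noncomputable def W (N n : ℕ) [NeZero n] (m : ℕ) : Submodule ℝ (VV N n) :=
  Submodule.span ℝ {A | ∃ I c b, m ≤ dg b ∧ A = Lt (Dp I * Mu c) (Bf b)}

lemma W_anti {N n : ℕ} [NeZero n] {m m' : ℕ} (h : m ≤ m') : W N n m' ≤ W N n m :=
  Submodule.span_mono fun _ ⟨I, c, b, hb, e⟩ => ⟨I, c, b, h.trans hb, e⟩

lemma Lt_Bf_mem {N n : ℕ} [NeZero n] {T : LEnd N} (hT : T ∈ TDO N) {b : Idx N n} {m : ℕ}
    (hb : m ≤ dg b) : Lt T (Bf b) ∈ W N n m := by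
  refine span_map_mem (LtA (Bf b)) ?_ hT
  rintro _ ⟨I, c, rfl⟩
  exact Submodule.subset_span ⟨I, c, b, hb, rfl⟩

lemma one_mem_TDO {N : ℕ} : (1 : LEnd N) ∈ TDO N := by
  have := Dp_Mu_mem (0 : MI N) (1 : LF N)
  rwa [Dp_zero, one_mul, Mu_one] at this

lemma W_induction {N n : ℕ} [NeZero n] {M' : Type*} [AddCommGroup M'] [Module ℝ M']
    {P : Submodule ℝ M'} (φ : VV N n →ₗ[ℝ] M') {m : ℕ}
    (h : ∀ T ∈ TDO N, ∀ b, m ≤ dg b → φ (Lt T (Bf b)) ∈ P) {A : VV N n} (hA : A ∈ W N n m) :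
    φ A ∈ P := by
  refine span_map_mem φ ?_ hA
  rintro _ ⟨I, c, b, hb, rfl⟩
  exact h _ (Dp_Mu_mem _ _) b hb

/-- `f` depends on no `u_J` with `|J| > r`. -/
def OrdLE {N : ℕ} (r : ℕ) (f : LF N) : Prop := ∀ J : MI N, r < ∑ i, J i → Ue J f = 0

lemma OrdLE.mono {N : ℕ} {r r' : ℕ} (h : r ≤ r') {f : LF N} (hf : OrdLE r f) : OrdLE r' f :=
  fun J hJ => hf J (h.trans_lt hJ)

lemma exists_ordLE {N : ℕ} (f : LF N) : ∃ r, OrdLE r f := by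
  obtain ⟨S, hS⟩ := exists_Ue_eq_zero f
  refine ⟨S.sup fun J => ∑ i, J i, fun J hJ => hS J fun h => ?_⟩
  exact absurd (Finset.le_sup (f := fun J => ∑ i, J i) h) (not_le.mpr hJ)

lemma exists_ordLE_tuple {N n : ℕ} (f : Fin n → LF N) : ∃ r, ∀ j, OrdLE r (f j) := by
  choose r hr using fun j => exists_ordLE (f j)
  exact ⟨Finset.univ.sup r, fun j => (hr j).mono (Finset.le_sup (Finset.mem_univ j))⟩

lemma OrdLE.xf_mul {N : ℕ} {r : ℕ} {f : LF N} (hf : OrdLE r f) (i : Fin N) :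
    OrdLE r (xf i * f) := fun J hJ => by
  rw [Ue_mul, hf J hJ, Ue_xf, mul_zero, zero_mul, add_zero]

lemma OrdLE.De {N : ℕ} {r : ℕ} {f : LF N} (hf : OrdLE r f) (i : Fin N) :
    OrdLE (r + 1) (De i f) := fun J hJ => by
  have h0 : JetBundle.De i (Ue J f) = 0 := by rw [hf J (by omega), map_zero]
  rcases Ue_De J i with h | ⟨K, rfl, h⟩
  · have := LinearMap.congr_fun h f
    simpa [h0] using this
  · have := LinearMap.congr_fun h f
    rw [sum_inc] at hJ
    rw [hf K (by omega)] at this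
    simpa [h0] using this

lemma Up_eq_zero {N : ℕ} {r : ℕ} {f : LF N} (hf : OrdLE r f) {α : MI N →₀ ℕ} (h : r < degf α) :
    Up α f = 0 := by
  induction α using exponent_induction with
  | h0 => simp [degf] at h
  | hs J α ih =>
    have hc : Ue J * Up α = Up α * Ue J := by
      clear ih h
      induction α using exponent_induction with
      | h0 => rw [Up_zero, one_mul, mul_one]
      | hs K α ih => rw [Up_add_single, mul_assoc, ← ih, ← mul_assoc, Ue_comm, mul_assoc]
    rw [degf_add, degf_single, lt_max_iff] at h
    rw [Up_add_single]
    rcases h with h | h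
    · rw [hc, Module.End.mul_apply, hf J h, map_zero]
    · rw [Module.End.mul_apply, ih h, map_zero]

/-- Operators vanishing on tuples of functions of order at most `r`. -/
def Z (N n r : ℕ) : Submodule ℝ (VV N n) where
  carrier := {A | ∀ f, (∀ j, OrdLE r (f j)) → A f = 0}
  add_mem' {A B} hA hB f hf := by rw [Pi.add_apply, hA f hf, hB f hf, add_zero]
  zero_mem' _ _ := rfl
  smul_mem' c A hA f hf := by rw [Pi.smul_apply, hA f hf, smul_zero]

lemma Z_anti {N n r r' : ℕ} (h : r ≤ r') : Z N n r' ≤ Z N n r :=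
  fun _ hA f hf => hA f fun j => (hf j).mono h

lemma eq_zero_of_forall_Z {N n : ℕ} {A : VV N n} (h : ∀ r, A ∈ Z N n r) : A = 0 :=
  funext fun f => by
    obtain ⟨r, hr⟩ := exists_ordLE_tuple f
    exact h r f hr

/-- An operator of differential degree above `n * r` differentiates some argument by a `u_J` with
`|J| > r`. -/
lemma W_le_Z {N n : ℕ} [NeZero n] {r m : ℕ} (h : n * r < m) : W N n m ≤ Z N n r := by
  intro A hA
  refine W_induction (P := Z N n r) LinearMap.id ?_ hA
  intro T _ b hb f hf
  obtain ⟨j, hj⟩ : ∃ j, r < degf (b.2 j) := by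
    by_contra! hh
    have : dg b ≤ ∑ _j : Fin n, r := Finset.sum_le_sum fun j _ => hh j
    simp at this
    omega
  have : tb b j (f j) = 0 := by
    rw [tb]
    split
    · exact Up_eq_zero (hf j) hj
    · rw [Module.End.mul_apply, Up_eq_zero (hf j) hj, map_zero]
  rw [LinearMap.id_apply, Lt_apply, Bf, Finset.prod_eq_zero (Finset.mem_univ j) this, map_zero]

/-- Local multidifferential operators: sums of series of elements of the `W m`, where `A` is the
sum if on functions of order at most `r` it agrees with all sufficiently long partial sums. -/
def G (N n : ℕ) [NeZero n] : Submodule ℝ (VV N n) where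
  carrier := {A | ∃ a : ℕ → VV N n, (∀ m, a m ∈ W N n m) ∧
    ∀ r, ∃ M₀, ∀ M ≥ M₀, A - ∑ m ∈ Finset.range M, a m ∈ Z N n r}
  add_mem' := by
    rintro A B ⟨a, ha, hA⟩ ⟨b, hb, hB⟩
    refine ⟨a + b, fun m => add_mem (ha m) (hb m), fun r => ?_⟩
    obtain ⟨M₁, h₁⟩ := hA r
    obtain ⟨M₂, h₂⟩ := hB r
    refine ⟨max M₁ M₂, fun M hM => ?_⟩
    have := add_mem (h₁ M (le_of_max_le_left hM)) (h₂ M (le_of_max_le_right hM))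
    simpa only [Pi.add_apply, Finset.sum_add_distrib, add_sub_add_comm] using this
  zero_mem' := ⟨0, fun m => zero_mem _, fun r => ⟨0, fun M _ => by simp⟩⟩
  smul_mem' := by
    rintro c A ⟨a, ha, hA⟩
    refine ⟨c • a, fun m => Submodule.smul_mem _ _ (ha m), fun r => ?_⟩
    obtain ⟨M₁, h₁⟩ := hA r
    refine ⟨M₁, fun M hM => ?_⟩
    have := Submodule.smul_mem _ c (h₁ M hM)
    simpa only [Pi.smul_apply, ← Finset.smul_sum, ← smul_sub] using this

/-- Linear operations that lower the filtration by at most one and are continuous preserve local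
multidifferential operators. -/
lemma G_map {N n : ℕ} [NeZero n] (Φ : Module.End ℝ (VV N n))
    (hW : ∀ m, ∀ A ∈ W N n (m + 1), Φ A ∈ W N n m) (hW0 : ∀ A ∈ W N n 0, Φ A ∈ W N n 0)
    (hZ : ∀ r, ∃ r', ∀ A ∈ Z N n r', Φ A ∈ Z N n r) {A : VV N n} (hA : A ∈ G N n) :
    Φ A ∈ G N n := by
  obtain ⟨a, ha, hA⟩ := hA
  let a' : ℕ → VV N n := fun m => Φ (a (m + 1)) + if m = 0 then Φ (a 0) else 0
  have hsum : ∀ M, ∑ m ∈ Finset.range (M + 1), a' m = Φ (∑ m ∈ Finset.range (M + 2), a m) := by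
    intro M
    rw [Finset.sum_range_succ' _ (M + 1), map_add, map_sum, Finset.sum_add_distrib]
    simp
  refine ⟨a', fun m => ?_, fun r => ?_⟩
  · refine add_mem (hW m _ (ha _)) ?_
    split
    · next h => subst h; exact hW0 _ (ha 0)
    · exact zero_mem _
  · obtain ⟨r', hr'⟩ := hZ r
    obtain ⟨M₀, h⟩ := hA r'
    refine ⟨M₀ + 1, fun M hM => ?_⟩
    obtain ⟨M, rfl⟩ : ∃ k, M = k + 1 := ⟨M - 1, by omega⟩
    rw [hsum, ← map_sub]
    exact hr' _ (h _ (by omega))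

/-- Any sequence of elements of the `W m` can be summed. -/
lemma exists_sum {N n : ℕ} [NeZero n] (a : ℕ → VV N n) (ha : ∀ m, a m ∈ W N n m) :
    ∃ A : VV N n, ∀ r M, n * r < M → A - ∑ m ∈ Finset.range M, a m ∈ Z N n r := by
  choose r hr using exists_ordLE_tuple (N := N) (n := n)
  have key : ∀ f s, (∀ j, OrdLE s (f j)) → ∀ M M', n * s < M → M ≤ M' →
      ∑ m ∈ Finset.range M', a m f = ∑ m ∈ Finset.range M, a m f := by
    intro f s hs M M' hM hMM'
    symm
    refine Finset.sum_subset (Finset.range_mono hMM') fun m _ hm => ?_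
    exact W_le_Z (by simp at hm; omega) (ha m) f hs
  refine ⟨fun f => ∑ m ∈ Finset.range (n * r f + 1), a m f, fun s M hM f hf => ?_⟩
  rw [Pi.sub_apply, Finset.sum_apply, sub_eq_zero]
  rw [← key f (r f) (hr f) _ (max (n * r f + 1) M) (Nat.lt_succ_self _) (le_max_left _ _),
    ← key f s hf M _ hM (le_max_right _ _)]

lemma W_le_G {N n : ℕ} [NeZero n] : W N n 0 ≤ G N n := fun A hA =>
  ⟨fun m => if m = 0 then A else 0, fun m => by
    dsimp only; split
    · next h => subst h; exact hA
    · exact zero_mem _, fun r => ⟨1, fun M hM => by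
    rw [Finset.sum_ite_eq', if_pos (Finset.mem_range.mpr hM), sub_self]; exact zero_mem _⟩⟩

/-! ### The Weyl algebra action on local multidifferential operators -/

/-- `A ↦ d/dx^i ∘ A`. -/
noncomputable def DG (N n : ℕ) (i : Fin N) : Module.End ℝ (VV N n) := Lt (De i)

lemma DG_apply {N n : ℕ} (i : Fin N) (A : VV N n) (f : Fin n → LF N) :
    DG N n i A f = De i (A f) := rfl

/-- The commutator with multiplication by `x^i`, acting on the first argument. -/
noncomputable def cx (N n : ℕ) [NeZero n] (i : Fin N) : Module.End ℝ (VV N n) where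
  toFun A f := A (Function.update f 0 (xf i * f 0)) - xf i * A f
  map_add' A B := by ext1 f; simp only [Pi.add_apply]; ring
  map_smul' c A := by
    ext1 f
    simp only [Pi.smul_apply, RingHom.id_apply, mul_smul_comm, smul_sub]

lemma cx_apply {N n : ℕ} [NeZero n] (i : Fin N) (A : VV N n) (f : Fin n → LF N) :
    cx N n i A f = A (Function.update f 0 (xf i * f 0)) - xf i * A f := rfl

lemma cx_Lt {N n : ℕ} [NeZero n] (i : Fin N) (T : LEnd N) (A : VV N n) :
    cx N n i (Lt T A) = Lt T (cx N n i A) + Lt (T * Mu (xf i) - Mu (xf i) * T) A := by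
  ext1 f
  rw [Pi.add_apply, Lt_sub, Pi.sub_apply, Lt_mul, Lt_mul]
  simp only [cx_apply, Lt_apply, Mu_apply, map_sub]
  abel

lemma DG_comm {N n : ℕ} (i j : Fin N) (A : VV N n) :
    DG N n i (DG N n j A) = DG N n j (DG N n i A) := by
  rw [DG, DG, ← Lt_mul, ← Lt_mul, De_comm]

lemma cx_comm {N n : ℕ} [NeZero n] (i j : Fin N) (A : VV N n) :
    cx N n i (cx N n j A) = cx N n j (cx N n i A) := by
  ext1 f
  simp only [cx_apply, Function.update_idem, Function.update_self, mul_left_comm (xf i) (xf j)]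
  ring

lemma cx_DG {N n : ℕ} [NeZero n] (i j : Fin N) (A : VV N n) :
    cx N n j (DG N n i A) = DG N n i (cx N n j A) + if i = j then A else 0 := by
  rw [DG, cx_Lt, De_Mu_xf, add_sub_cancel_left]
  split <;> rfl

/-- Operators in `∂/∂u` commute with multiplication by `x^i`. -/
lemma Up_xf_mul {N : ℕ} (α : MI N →₀ ℕ) (i : Fin N) (f : LF N) :
    Up α (xf i * f) = xf i * Up α f := by
  induction α using exponent_induction with
  | h0 => rw [Up_zero]; rfl
  | hs J α ih =>
    rw [Up_add_single, Module.End.mul_apply, ih, Ue_mul, Ue_xf, zero_mul, add_zero]; rfl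

/-- The basic operator splits off its first argument. -/
lemma Bf_eq {N n : ℕ} [NeZero n] (b : Idx N n) (f : Fin n → LF N) :
    Bf b f = Up (b.2 0) (f 0) * ∏ l ∈ Finset.univ.erase 0, Dp (b.1 l) (Up (b.2 l) (f l)) := by
  rw [Bf, ← Finset.mul_prod_erase _ _ (Finset.mem_univ (0 : Fin n))]
  refine congrArg₂ _ ?_ ?_
  · rw [tb, if_pos rfl]
  · refine Finset.prod_congr rfl fun l hl => ?_
    rw [tb, if_neg (Finset.ne_of_mem_erase hl)]; rfl

lemma cx_Bf {N n : ℕ} [NeZero n] (i : Fin N) (b : Idx N n) : cx N n i (Bf b) = 0 := by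
  ext1 f
  have : ∏ l ∈ Finset.univ.erase 0,
        Dp (b.1 l) (Up (b.2 l) (Function.update f 0 (xf i * f 0) l)) =
      ∏ l ∈ Finset.univ.erase 0, Dp (b.1 l) (Up (b.2 l) (f l)) :=
    Finset.prod_congr rfl fun l hl => by rw [Function.update_of_ne (Finset.ne_of_mem_erase hl)]
  rw [cx_apply, Bf_eq, Bf_eq, this, Function.update_self, Up_xf_mul, mul_assoc, sub_self]; rfl

lemma DG_W {N n : ℕ} [NeZero n] (i : Fin N) {m : ℕ} {A : VV N n} (hA : A ∈ W N n m) :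
    DG N n i A ∈ W N n m :=
  W_induction _ (fun T hT b hb => by
    rw [DG, ← Lt_mul]; exact Lt_Bf_mem (De_mul_mem _ hT) hb) hA

lemma cx_W {N n : ℕ} [NeZero n] (i : Fin N) {m : ℕ} {A : VV N n} (hA : A ∈ W N n m) :
    cx N n i A ∈ W N n m :=
  W_induction _ (fun T hT b hb => by
    rw [cx_Lt, cx_Bf, map_zero, zero_add]
    exact Lt_Bf_mem (sub_mem (mul_Mu_mem _ hT) (Mu_mul_mem _ hT)) hb) hA

lemma DG_Z {N n : ℕ} (i : Fin N) {r : ℕ} {A : VV N n} (hA : A ∈ Z N n r) :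
    DG N n i A ∈ Z N n r := fun f hf => by rw [DG_apply, hA f hf, map_zero]

lemma cx_Z {N n : ℕ} [NeZero n] (i : Fin N) {r : ℕ} {A : VV N n} (hA : A ∈ Z N n r) :
    cx N n i A ∈ Z N n r := fun f hf => by
  rw [cx_apply, hA f hf, hA _ fun j => ?_, mul_zero, sub_zero]
  rcases eq_or_ne j 0 with rfl | hj
  · rw [Function.update_self]; exact (hf 0).xf_mul i
  · rw [Function.update_of_ne hj]; exact hf j

lemma DG_G {N n : ℕ} [NeZero n] (i : Fin N) (A : VV N n) (hA : A ∈ G N n) :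
    DG N n i A ∈ G N n :=
  G_map _ (fun m _ h => W_anti m.le_succ (DG_W i h)) (fun _ h => DG_W i h)
    (fun r => ⟨r, fun _ h => DG_Z i h⟩) hA

lemma cx_G {N n : ℕ} [NeZero n] (i : Fin N) (A : VV N n) (hA : A ∈ G N n) :
    cx N n i A ∈ G N n :=
  G_map _ (fun m _ h => W_anti m.le_succ (cx_W i h)) (fun _ h => cx_W i h)
    (fun r => ⟨r, fun _ h => cx_Z i h⟩) hA

/-- The Euler operator `∑ d/dx^i ∘ [·, x^i]`. -/
noncomputable def EE (N n : ℕ) [NeZero n] : Module.End ℝ (VV N n) := eV (DG N n) (cx N n)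

lemma EE_W {N n : ℕ} [NeZero n] {m : ℕ} {A : VV N n} (hA : A ∈ W N n m) :
    EE N n A ∈ W N n m := by
  rw [EE, eV_apply]; exact sum_mem fun i _ => DG_W i (cx_W i hA)

lemma EE_Z {N n : ℕ} [NeZero n] {r : ℕ} {A : VV N n} (hA : A ∈ Z N n r) :
    EE N n A ∈ Z N n r := by
  rw [EE, eV_apply]; exact sum_mem fun i _ => DG_Z i (cx_Z i hA)

/-- The spanning operators are eigenvectors of the Euler operator. -/
lemma EE_eigen {N n : ℕ} [NeZero n] (I : MI N) (c : LF N) (b : Idx N n) :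
    EE N n (Lt (Dp I * Mu c) (Bf b)) = ((∑ i, I i : ℕ) : ℝ) • Lt (Dp I * Mu c) (Bf b) := by
  induction I using MI_induction with
  | h0 =>
    have : ∀ i, cx N n i (Lt (Dp 0 * Mu c) (Bf b)) = 0 := fun i => by
      rw [cx_Lt, cx_Bf, map_zero, zero_add, Dp_zero, one_mul, Mu_comm, sub_self]; rfl
    rw [EE, eV_apply]
    simp [this]
  | hs j I ih =>
    have hED : ∀ A, EE N n (DG N n j A) = DG N n j (EE N n A) + DG N n j A := by
      intro A
      simp only [EE, eV_apply, cx_DG, map_add, Finset.sum_add_distrib, map_sum]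
      congr 1
      · exact Finset.sum_congr rfl fun i _ => DG_comm _ _ _
      · rw [Finset.sum_eq_single j (by intro i _ hi; rw [if_neg hi.symm, map_zero]) (by simp),
          if_pos rfl]
    rw [Dp_inc, mul_assoc, Lt_mul]
    change EE N n (DG N n j _) = _ • DG N n j _
    rw [hED, ih, map_smul, sum_inc, Nat.cast_add, add_smul, Nat.cast_one, one_smul]

lemma surj_W {N n : ℕ} [NeZero n] {a : ℝ} (ha : 0 < a) {m : ℕ} {A : VV N n} (hA : A ∈ W N n m) :
    ∃ B ∈ W N n m, EE N n B + a • B = A := by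
  have : A ∈ (W N n m).map (EE N n + a • LinearMap.id) := by
    refine span_map_mem LinearMap.id ?_ hA
    rintro _ ⟨I, c, b, hb, rfl⟩
    refine ⟨(((∑ i, I i : ℕ) : ℝ) + a)⁻¹ • Lt (Dp I * Mu c) (Bf b),
      Submodule.smul_mem _ _ (Submodule.subset_span ⟨I, c, b, hb, rfl⟩), ?_⟩
    have h0 : ((∑ i, I i : ℕ) : ℝ) + a ≠ 0 := by positivity
    rw [map_smul, LinearMap.add_apply, LinearMap.smul_apply, LinearMap.id_apply, EE_eigen,
      ← add_smul, smul_smul, inv_mul_cancel₀ h0, one_smul]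
  obtain ⟨B, hB, e⟩ := this
  exact ⟨B, hB, e⟩

/-- `E + a` is solved termwise on a series of eigenvectors with eigenvalues at least `0`. -/
lemma surj_G {N n : ℕ} [NeZero n] {a : ℝ} (ha : 0 < a) {A : VV N n} (hA : A ∈ G N n) :
    ∃ B ∈ G N n, EE N n B + a • B = A := by
  obtain ⟨s, hs, hA⟩ := hA
  choose t ht e using fun m => surj_W ha (hs m)
  obtain ⟨B, hB⟩ := exists_sum t ht
  refine ⟨B, ⟨t, ht, fun r => ⟨n * r + 1, fun M hM => hB r M hM⟩⟩, ?_⟩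
  rw [← sub_eq_zero]
  refine eq_zero_of_forall_Z fun r => ?_
  obtain ⟨M₀, hM₀⟩ := hA r
  have h1 := hB r (max M₀ (n * r + 1)) (Nat.lt_of_succ_le (le_max_right _ _))
  have h2 := hM₀ (max M₀ (n * r + 1)) (le_max_left _ _)
  have h3 := sub_mem (add_mem (EE_Z h1) (Submodule.smul_mem _ a h1)) h2
  convert h3 using 1
  simp only [← e, map_sub, map_sum, Finset.smul_sum, smul_sub, Finset.sum_add_distrib]
  abel

/-- `-a` is not an eigenvalue of the Euler operator. The terms of a series for `A` are not unique,
so this is tested modulo operators vanishing on functions of order at most `r`, where `A` is a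
finite sum. -/
lemma inj_G {N n : ℕ} [NeZero n] {a : ℝ} (ha : 0 < a) {A : VV N n} (hA : A ∈ G N n)
    (h0 : EE N n A + a • A = 0) : A = 0 := by
  refine eq_zero_of_forall_Z fun r => ?_
  -- every finite sum is killed by a polynomial in the Euler operator not vanishing at `-a`
  have ann : ∀ S ∈ W N n 0, ∃ p : Polynomial ℝ, p.eval (-a) ≠ 0 ∧
      Polynomial.aeval (EE N n) p S = 0 := by
    intro S hS
    induction hS using Submodule.span_induction with
    | mem S h =>
      obtain ⟨I, c, b, _, rfl⟩ := h
      refine ⟨Polynomial.X - Polynomial.C ((∑ i, I i : ℕ) : ℝ), ?_, ?_⟩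
      · have : (0 : ℝ) ≤ ((∑ i, I i : ℕ) : ℝ) := Nat.cast_nonneg _
        simp only [Polynomial.eval_sub, Polynomial.eval_X, Polynomial.eval_C]
        exact ne_of_lt (by linarith)
      · rw [map_sub, Polynomial.aeval_X, Polynomial.aeval_C, LinearMap.sub_apply, EE_eigen,
          Module.algebraMap_end_apply, sub_self]
    | zero => exact ⟨1, by simp, by simp⟩
    | add S T _ _ hS hT =>
      obtain ⟨p, hp, hpS⟩ := hS
      obtain ⟨q, hq, hqT⟩ := hT
      refine ⟨p * q, by rw [Polynomial.eval_mul]; exact mul_ne_zero hp hq, ?_⟩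
      rw [map_add]
      nth_rw 1 [mul_comm p q]
      rw [map_mul, map_mul, Module.End.mul_apply, Module.End.mul_apply, hpS, hqT, map_zero,
        map_zero, add_zero]
    | smul c S _ hS =>
      obtain ⟨p, hp, hpS⟩ := hS
      exact ⟨p, hp, by rw [map_smul, hpS, smul_zero]⟩
  have pZ : ∀ p : Polynomial ℝ, ∀ B ∈ Z N n r, Polynomial.aeval (EE N n) p B ∈ Z N n r := by
    intro p
    induction p using Polynomial.induction_on' with
    | add p q hp hq =>
      intro B hB
      rw [map_add, LinearMap.add_apply]; exact add_mem (hp B hB) (hq B hB)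
    | monomial k c =>
      intro B hB
      rw [Polynomial.aeval_monomial, Module.End.mul_apply, Module.algebraMap_end_apply]
      refine Submodule.smul_mem _ _ ?_
      induction k with
      | zero => simpa using hB
      | succ k ih => rw [pow_succ', Module.End.mul_apply]; exact EE_Z ih
  have pA : ∀ p : Polynomial ℝ, Polynomial.aeval (EE N n) p A = p.eval (-a) • A := by
    have hE : EE N n A = (-a) • A := by rw [neg_smul]; exact eq_neg_of_add_eq_zero_left h0
    intro p
    induction p using Polynomial.induction_on' with
    | add p q hp hq => rw [map_add, LinearMap.add_apply, hp, hq, Polynomial.eval_add, add_smul]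
    | monomial k c =>
      rw [Polynomial.aeval_monomial, Module.End.mul_apply, Module.algebraMap_end_apply,
        Polynomial.eval_monomial, mul_smul]
      congr 1
      induction k with
      | zero => simp
      | succ k ih => rw [pow_succ', Module.End.mul_apply, ih, map_smul, hE, smul_smul, pow_succ]
  obtain ⟨s, hs, hA⟩ := hA
  obtain ⟨M, hM⟩ := hA r
  obtain ⟨p, hp, hpS⟩ := ann (∑ m ∈ Finset.range M, s m)
    (sum_mem fun m _ => W_anti (Nat.zero_le m) (hs m))
  have := pZ p _ (hM M le_rfl)
  rw [map_sub, hpS, sub_zero, pA] at this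
  have := Submodule.smul_mem _ (p.eval (-a))⁻¹ this
  rwa [smul_smul, inv_mul_cancel₀ hp, one_smul] at this

/-- Closed forms of weight less than `N` with multidifferential coefficients are exact. -/
lemma exact_G {N n : ℕ} [NeZero n] {w : ℕ} (hw : w < N) {ω : (Fin N → Bool) → VV N n}
    (hG : ∀ δ, ω δ ∈ G N n) (hs : ∀ δ, wt δ ≠ w → ω δ = 0) (hd : ∀ δ, dV (DG N n) ω δ = 0) :
    ∃ η : (Fin N → Bool) → VV N n, (∀ δ, η δ ∈ G N n) ∧ (∀ δ, wt δ + 1 ≠ w → η δ = 0) ∧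
      ∀ δ, dV (DG N n) η δ = ω δ :=
  weyl_exact DG_comm cx_comm cx_DG DG_G cx_G (fun _ ha _ hA => surj_G ha hA)
    (fun _ ha _ hA h => inj_G ha hA h) hw hG hs hd

/-! ### Precomposition with total derivatives -/

/-- `A ↦ A ∘ d/dx^i` with the total derivative acting on the `j`-th argument. -/
noncomputable def PC (N n : ℕ) (j : Fin n) (i : Fin N) : Module.End ℝ (VV N n) where
  toFun A f := A (Function.update f j (De i (f j)))
  map_add' _ _ := rfl
  map_smul' _ _ := rfl

lemma PC_apply {N n : ℕ} (j : Fin n) (i : Fin N) (A : VV N n) (f : Fin n → LF N) :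
    PC N n j i A f = A (Function.update f j (De i (f j))) := rfl

lemma PC_Lt {N n : ℕ} (j : Fin n) (i : Fin N) (T : LEnd N) (A : VV N n) :
    PC N n j i (Lt T A) = Lt T (PC N n j i A) := rfl

lemma PC_comm {N n : ℕ} (j j' : Fin n) (i i' : Fin N) (A : VV N n) :
    PC N n j i (PC N n j' i' A) = PC N n j' i' (PC N n j i A) := by
  ext1 f
  rcases eq_or_ne j j' with rfl | h
  · have : De i' (De i (f j)) = De i (De i' (f j)) := LinearMap.congr_fun (De_comm i' i) _
    simp only [PC_apply, Function.update_self, Function.update_idem, this]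
  · simp only [PC_apply, Function.update_of_ne h, Function.update_of_ne h.symm,
      Function.update_comm h]

lemma PC_Z {N n : ℕ} (j : Fin n) (i : Fin N) {r : ℕ} {A : VV N n} (hA : A ∈ Z N n (r + 1)) :
    PC N n j i A ∈ Z N n r := fun f hf => by
  refine hA _ fun l => ?_
  rcases eq_or_ne l j with rfl | hl
  · rw [Function.update_self]; exact (hf l).De i
  · rw [Function.update_of_ne hl]; exact (hf l).mono (Nat.le_succ r)

/-- Products of endomorphisms applied to the arguments. -/
noncomputable def Bg {N n : ℕ} (t : Fin n → LEnd N) : VV N n := fun f => ∏ l, t l (f l)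

lemma Bf_eq_Bg {N n : ℕ} [NeZero n] (b : Idx N n) : Bf b = Bg (tb b) := rfl

lemma Bg_update_apply {N n : ℕ} (t : Fin n → LEnd N) (j : Fin n) (S : LEnd N) (f : Fin n → LF N) :
    Bg (Function.update t j S) f = S (f j) * ∏ l ∈ Finset.univ.erase j, t l (f l) := by
  rw [Bg, ← Finset.mul_prod_erase _ _ (Finset.mem_univ j), Function.update_self]
  congr 1
  exact Finset.prod_congr rfl fun l hl => by
    rw [Function.update_of_ne (Finset.ne_of_mem_erase hl)]

/-- Products are linear in each factor. -/
noncomputable def BgL {N n : ℕ} (t : Fin n → LEnd N) (j : Fin n) : LEnd N →ₗ[ℝ] VV N n where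
  toFun S := Bg (Function.update t j S)
  map_add' S T := by
    ext1 f
    simp only [Pi.add_apply, Bg_update_apply, LinearMap.add_apply, add_mul]
  map_smul' c S := by
    ext1 f
    simp only [Pi.smul_apply, Bg_update_apply, LinearMap.smul_apply, RingHom.id_apply,
      smul_mul_assoc]

lemma BgL_apply {N n : ℕ} (t : Fin n → LEnd N) (j : Fin n) (S : LEnd N) :
    BgL t j S = Bg (Function.update t j S) := rfl

lemma PC_Bg {N n : ℕ} (t : Fin n → LEnd N) (j : Fin n) (i : Fin N) :
    PC N n j i (Bg t) = BgL t j (t j * De i) := by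
  ext1 f
  rw [BgL_apply, Bg_update_apply, PC_apply, Bg, ← Finset.mul_prod_erase _ _ (Finset.mem_univ j),
    Function.update_self]
  congr 1
  exact Finset.prod_congr rfl fun l hl => by
    rw [Function.update_of_ne (Finset.ne_of_mem_erase hl)]

lemma De_prod {N n : ℕ} (i : Fin N) (g : Fin n → LF N) (s : Finset (Fin n)) :
    De i (∏ l ∈ s, g l) = ∑ l ∈ s, De i (g l) * ∏ k ∈ s.erase l, g k := by
  induction s using Finset.induction_on with
  | empty =>
    rw [Finset.prod_empty, Finset.sum_empty]
    exact (TD i).map_one_eq_zero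
  | insert a s ha ih =>
    rw [Finset.prod_insert ha, De_mul, ih, Finset.sum_insert ha, Finset.erase_insert ha, add_comm,
      Finset.mul_sum]
    congr 1
    refine Finset.sum_congr rfl fun l hl => ?_
    have : a ≠ l := fun h => ha (h ▸ hl)
    rw [Finset.erase_insert_of_ne this, Finset.prod_insert fun h => ha (Finset.mem_of_mem_erase h)]
    ring

lemma DG_Bg {N n : ℕ} (t : Fin n → LEnd N) (i : Fin N) :
    DG N n i (Bg t) = ∑ l, BgL t l (De i * t l) := by
  ext1 f
  rw [DG_apply, Bg, De_prod, Finset.sum_apply]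
  exact Finset.sum_congr rfl fun l _ => by rw [BgL_apply, Bg_update_apply]; rfl

lemma Bf_mem {N n : ℕ} [NeZero n] {b : Idx N n} {m : ℕ} (hb : m ≤ dg b) : Bf b ∈ W N n m :=
  Lt_Bf_mem (T := 1) one_mem_TDO hb

lemma BgL_De_mem_of_ne {N n : ℕ} [NeZero n] (b : Idx N n) {l : Fin n} (hl : l ≠ 0) (i : Fin N) :
    BgL (tb b) l (De i * tb b l) ∈ W N n (dg b) := by
  have : BgL (tb b) l (De i * tb b l) = Bf (Function.update b.1 l (inc i (b.1 l)), b.2) := by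
    rw [BgL_apply, Bf_eq_Bg]
    congr 1
    funext k
    rcases eq_or_ne k l with rfl | hk
    · simp only [tb, Function.update_self, if_neg hl, Dp_inc, mul_assoc]
    · simp only [tb, Function.update_of_ne hk]
  rw [this]
  exact Bf_mem le_rfl

/-- On the first argument, integration by parts moves the total derivative to the outside and to
the other arguments. -/
lemma BgL_De_mem {N n : ℕ} [NeZero n] (b : Idx N n) (l : Fin n) (i : Fin N) :
    BgL (tb b) l (De i * tb b l) ∈ W N n (dg b) := by
  rcases eq_or_ne l 0 with rfl | hl
  · have h := DG_Bg (tb b) i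
    rw [← Finset.add_sum_erase _ _ (Finset.mem_univ (0 : Fin n)), ← sub_eq_iff_eq_add] at h
    rw [← h]
    refine sub_mem (DG_W i (Bf_mem le_rfl)) (sum_mem fun k hk => ?_)
    exact BgL_De_mem_of_ne b (Finset.ne_of_mem_erase hk) i
  · exact BgL_De_mem_of_ne b hl i

lemma Dp_De {N : ℕ} (I : MI N) (i : Fin N) : Dp I * De i = De i * Dp I := by
  induction I using MI_induction with
  | h0 => rw [Dp_zero, one_mul, mul_one]
  | hs j I ih => rw [Dp_inc, mul_assoc, ih, ← mul_assoc, De_comm, mul_assoc]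

/-- Commuting `∂^{α_j}` past the new total derivative lowers the differential degree by at most
one. -/
lemma PC_Bf_mem {N n : ℕ} [NeZero n] (j : Fin n) (i : Fin N) (b : Idx N n) :
    PC N n j i (Bf b) ∈ W N n (dg b - 1) := by
  have e : tb b j * De i = De i * tb b j + (tb b j * De i - De i * tb b j) := by abel
  rw [Bf_eq_Bg, PC_Bg, e, map_add]
  refine add_mem (W_anti (Nat.sub_le _ _) (BgL_De_mem b j i)) ?_
  have key : ∀ β, degf (b.2 j) ≤ degf β + 1 →
      BgL (tb b) j (if j = 0 then Up β else Dp (b.1 j) * Up β) ∈ W N n (dg b - 1) := by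
    intro β hβ
    have : BgL (tb b) j (if j = 0 then Up β else Dp (b.1 j) * Up β) =
        Bf (b.1, Function.update b.2 j β) := by
      rw [BgL_apply, Bf_eq_Bg]
      congr 1
      funext k
      rcases eq_or_ne k j with rfl | hk
      · simp only [tb, Function.update_self]
      · simp only [tb, Function.update_of_ne hk]
    rw [this]
    refine Bf_mem ?_
    have h1 : dg b = degf (b.2 j) + ∑ k ∈ Finset.univ.erase j, degf (b.2 k) :=
      (Finset.add_sum_erase _ (fun k => degf (b.2 k)) (Finset.mem_univ j)).symm
    have h2 : dg (b.1, Function.update b.2 j β) = degf β + ∑ k ∈ Finset.univ.erase j, degf (b.2 k) := by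
      rw [dg, ← Finset.add_sum_erase _ _ (Finset.mem_univ j)]
      dsimp only
      rw [Function.update_self]
      congr 1
      exact Finset.sum_congr rfl fun k hk => by
        rw [Function.update_of_ne (Finset.ne_of_mem_erase hk)]
    omega
  by_cases hj : j = 0
  · simp only [tb, if_pos hj] at key ⊢
    refine span_map_mem (BgL (tb b) j) ?_ (Up_De_mem i (b.2 j))
    rintro _ ⟨β, hβ, rfl⟩
    exact key β hβ
  · have e2 : tb b j * De i - De i * tb b j =
        Dp (b.1 j) * (Up (b.2 j) * De i - De i * Up (b.2 j)) := by
      rw [tb, if_neg hj, mul_sub, ← mul_assoc (Dp _) (De i), Dp_De]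
      simp only [mul_assoc]
    rw [e2]
    refine span_map_mem (BgL (tb b) j ∘ₗ LinearMap.mulLeft ℝ (Dp (b.1 j))) ?_ (Up_De_mem i (b.2 j))
    rintro _ ⟨β, hβ, rfl⟩
    have := key β hβ
    rwa [if_neg hj] at this

lemma Lt_TDO_W {N n : ℕ} [NeZero n] {T : LEnd N} (hT : T ∈ TDO N) {m : ℕ} {A : VV N n}
    (hA : A ∈ W N n m) : Lt T A ∈ W N n m := by
  refine span_map_mem (LtA A) (P := W N n m) ?_ hT
  rintro _ ⟨I, c, rfl⟩
  rw [LtA_apply, Lt_mul]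
  have hc : Lt (Mu c) A ∈ W N n m :=
    W_induction _ (fun T hT b hb => by
      rw [← Lt_mul]; exact Lt_Bf_mem (Mu_mul_mem _ hT) hb) hA
  induction I using MI_induction with
  | h0 => rw [Dp_zero]; exact hc
  | hs j I ih => rw [Dp_inc, Lt_mul]; exact DG_W j ih

lemma PC_W {N n : ℕ} [NeZero n] (j : Fin n) (i : Fin N) {m : ℕ} {A : VV N n} (hA : A ∈ W N n m) :
    PC N n j i A ∈ W N n (m - 1) :=
  W_induction _ (fun T hT b hb => by
    rw [PC_Lt]
    exact Lt_TDO_W hT (W_anti (Nat.sub_le_sub_right hb 1) (PC_Bf_mem j i b))) hA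

lemma PC_G {N n : ℕ} [NeZero n] (j : Fin n) (i : Fin N) {A : VV N n} (hA : A ∈ G N n) :
    PC N n j i A ∈ G N n :=
  G_map (PC N n j i)
    (fun m A h => by
      have := PC_W j i h
      rwa [Nat.add_sub_cancel] at this)
    (fun A h => by
      have := PC_W j i h
      rwa [Nat.zero_sub] at this)
    (fun r => ⟨r + 1, fun _ h => PC_Z j i h⟩) hA

/-! ### Comparison with local differential operators -/

/-- The term of index `b` with coefficient `c` of a polarized local differential operator. -/
noncomputable def tm {N n : ℕ} [NeZero n] (b : Idx N n) : LF N →ₗ[ℝ] VV N n where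
  toFun c := Lt (Mu c * Dp (b.1 0)) (Bf b)
  map_add' c d := funext fun _ => add_mul c d _
  map_smul' r c := funext fun _ => smul_mul_assoc r c _

lemma tm_apply {N n : ℕ} [NeZero n] (b : Idx N n) (c : LF N) (f : Fin n → LF N) :
    tm b c f = c * Dp (b.1 0) (Bf b f) := rfl

lemma tm_mem {N n : ℕ} [NeZero n] (b : Idx N n) (c : LF N) : tm b c ∈ W N n (dg b) := by
  refine Lt_Bf_mem (Mu_mul_mem _ ?_) le_rfl
  have := Dp_Mu_mem (b.1 0) (1 : LF N)
  rwa [Mu_one, mul_one] at this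

lemma tm_zero {N n : ℕ} [NeZero n] {b : Idx N n} {f : Fin n → LF N} {r : ℕ}
    (hf : ∀ j, OrdLE r (f j)) (h : n * r < dg b) (c : LF N) : tm b c f = 0 :=
  W_le_Z h (tm_mem b c) f hf

lemma toFn_tm {N n : ℕ} [NeZero n] (b : Idx N n) (c : LF N) (f : Fin n → LF N) (pt : JetPt N) :
    toFn (tm b c f) pt = toFn c pt * DPow (b.1 0) (fun p => ∏ j,
      if j = (0 : Fin n) then UPow (b.2 j) (toFn (f j)) p
      else DPow (b.1 j) (UPow (b.2 j) (toFn (f j))) p) pt := by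
  have : toFn (Bf b f) = fun p => ∏ j,
      if j = (0 : Fin n) then UPow (b.2 j) (toFn (f j)) p
      else DPow (b.1 j) (UPow (b.2 j) (toFn (f j))) p := by
    ext1 p
    rw [Bf, map_prod, Finset.prod_apply]
    refine Finset.prod_congr rfl fun j _ => ?_
    rw [tb]
    split
    · rw [toFn_Up]
    · rw [Module.End.mul_apply, toFn_Dp, toFn_Up]
  rw [tm_apply, map_mul, Pi.mul_apply, toFn_Dp, this]

/-- The operator `A` is given by `A'` on local functions. -/
def Restricts {N n : ℕ} (A : Op N n) (A' : VV N n) : Prop :=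
  ∀ f : Fin n → LF N, A (fun j => toFn (f j)) = toFn (A' f)

lemma exists_LF {N n : ℕ} {g : Fin n → Fn N} (hg : LocalTuple g) :
    ∃ f : Fin n → LF N, g = fun j => toFn (f j) := ⟨fun j => ⟨g j, hg j⟩, rfl⟩

lemma localTuple_toFn {N n : ℕ} (f : Fin n → LF N) : LocalTuple fun j => toFn (f j) :=
  fun j => isLocal_toFn (f j)

lemma Presents_iff {N n : ℕ} [NeZero n] {A : Op N n} {A' : VV N n} (h : Restricts A A')
    (c : Idx N n → LF N) : Presents (fun b => toFn (c b)) A ↔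
      ∀ f pt, toFn (A' f) pt = ∑' b, toFn (tm b (c b) f) pt := by
  simp only [toFn_tm]
  constructor
  · intro hp f pt
    rw [← h f, hp _ (localTuple_toFn f)]; rfl
  · intro hp g hg pt
    obtain ⟨f, rfl⟩ := exists_LF hg
    rw [h f, hp f pt]; rfl

lemma IsPLDO.exists_G {N n : ℕ} [NeZero n] {A : Op N n} (hA : IsPLDO A) :
    ∃ A' ∈ G N n, Restricts A A' := by
  classical
  obtain ⟨q, ⟨hq, hfin⟩, hp⟩ := hA
  let c : Idx N n → LF N := fun b => ⟨q b, hq b⟩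
  have hc : ∀ b, q b = 0 → c b = 0 := fun b h => Subtype.ext h
  let S : ℕ → Finset (Idx N n) := fun m => (hfin m).toFinset
  have hS : ∀ m b, b ∈ S m ↔ q b ≠ 0 ∧ dg b ≤ m := fun m b => by
    simp only [S, Set.Finite.mem_toFinset, Set.mem_ofPred_eq]; rfl
  let a : ℕ → VV N n := fun m => ∑ b ∈ (S m).filter (fun b => dg b = m), tm b (c b)
  have ha : ∀ m, a m ∈ W N n m := fun m => sum_mem fun b hb => by
    have := tm_mem b (c b)
    rwa [(Finset.mem_filter.mp hb).2] at this
  obtain ⟨A', hA'⟩ := exists_sum a ha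
  refine ⟨A', ⟨a, ha, fun r => ⟨n * r + 1, fun M hM => hA' r M hM⟩⟩, fun f => ?_⟩
  obtain ⟨r, hr⟩ := exists_ordLE_tuple f
  have h1 : A' f = ∑ b ∈ S (n * r), tm b (c b) f := by
    have := hA' r (n * r + 1) (Nat.lt_succ_self _) f hr
    rw [Pi.sub_apply, Finset.sum_apply, sub_eq_zero] at this
    rw [this, ← Finset.sum_fiberwise_of_maps_to (s := S (n * r)) (g := dg)
      (t := Finset.range (n * r + 1))
      (fun b hb => Finset.mem_range.mpr (Nat.lt_succ_of_le ((hS _ _).mp hb).2))]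
    refine Finset.sum_congr rfl fun m hm => ?_
    refine (Finset.sum_apply f _ _).trans (Finset.sum_congr ?_ fun _ _ => rfl)
    have hm := Finset.mem_range.mp hm
    ext b
    simp only [Finset.mem_filter, hS]
    constructor <;> rintro ⟨⟨h, _⟩, h'⟩ <;> exact ⟨⟨h, by omega⟩, h'⟩
  ext1 pt
  rw [hp _ (localTuple_toFn f) pt, h1, map_sum, Finset.sum_apply]
  have : realizeP q (fun j => toFn (f j)) pt = ∑' b, toFn (tm b (c b) f) pt := by
    simp only [toFn_tm]; rfl
  rw [this]
  refine tsum_eq_sum fun b hb => ?_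
  rw [hS, not_and_or, not_not, not_le] at hb
  rcases hb with hb | hb
  · rw [hc b hb, map_zero]; exact congrFun (map_zero toFn) pt
  · rw [tm_zero hr hb]; exact congrFun (map_zero toFn) pt

/-- Elements of `W m` have a coefficient expansion with indices of degree at least `m`. -/
lemma exists_coeff {N n : ℕ} [NeZero n] {m : ℕ} {A : VV N n} (hA : A ∈ W N n m) :
    ∃ Q : Idx N n →₀ LF N, (∀ b, dg b < m → Q b = 0) ∧ Q.sum (fun b c => tm b c) = A := by
  have : A ∈ (Finsupp.supported (LF N) ℝ {b : Idx N n | m ≤ dg b}).map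
      (Finsupp.lsum ℝ (tm (N := N) (n := n))) := by
    refine W_induction (P := (Finsupp.supported (LF N) ℝ {b : Idx N n | m ≤ dg b}).map
      (Finsupp.lsum ℝ (tm (N := N) (n := n)))) LinearMap.id ?_ hA
    intro T hT b hb
    refine span_map_mem (LtA (Bf b)) ?_ (TDO_le hT)
    rintro _ ⟨q, I, rfl⟩
    refine ⟨Finsupp.single (Function.update b.1 0 I, b.2) q, ?_, ?_⟩
    · exact Finsupp.single_mem_supported ℝ q (s := {b : Idx N n | m ≤ dg b}) hb
    · rw [Finsupp.lsum_single, LtA_apply]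
      have : Bf (Function.update b.1 0 I, b.2) = Bf b := by
        rw [Bf_eq_Bg, Bf_eq_Bg]
        congr 1
        funext l
        by_cases hl : l = 0
        · simp only [tb, if_pos hl]
        · simp only [tb, if_neg hl, Function.update_of_ne hl]
      ext1 f
      rw [tm_apply, this]
      dsimp only
      rw [Function.update_self]; rfl
  obtain ⟨Q, hQ, e⟩ := this
  refine ⟨Q, fun b hb => ?_, e⟩
  by_contra h
  exact absurd ((Finsupp.mem_supported ℝ Q).mp hQ (Finsupp.mem_support_iff.mpr h)) (not_le.mpr hb)

lemma IsPLDO.of_G {N n : ℕ} [NeZero n] {A : Op N n} {A' : VV N n} (hA : A' ∈ G N n)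
    (hr : Restricts A A') : IsPLDO A := by
  classical
  obtain ⟨a, ha, hA⟩ := hA
  choose Q hQ0 hQ using fun m => exists_coeff (ha m)
  let c : Idx N n → LF N := fun b => ∑ m ∈ Finset.range (dg b + 1), Q m b
  refine ⟨fun b => toFn (c b), ⟨fun b => isLocal_toFn _, fun M => ?_⟩, ?_⟩
  · refine ((Finset.range (M + 1)).biUnion fun m => (Q m).support).finite_toSet.subset ?_
    rintro b ⟨hb, hbM⟩
    by_contra hn
    refine hb ?_
    have : c b = 0 := Finset.sum_eq_zero fun m hm => by
      by_contra h
      refine hn (Finset.mem_coe.mpr (Finset.mem_biUnion.mpr ⟨m, ?_, Finsupp.mem_support_iff.mpr h⟩))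
      have hm := Finset.mem_range.mp hm
      have hbM : dg b ≤ M := hbM
      exact Finset.mem_range.mpr (by omega)
    exact (congrArg toFn this).trans (map_zero toFn)
  · rw [Presents_iff hr]
    intro f pt
    obtain ⟨r, hf⟩ := exists_ordLE_tuple f
    obtain ⟨M₀, hM₀⟩ := hA r
    let M := max M₀ (n * r + 1)
    have hM : n * r < M := Nat.lt_of_succ_le (le_max_right _ _)
    have h1 : A' f = ∑ m ∈ Finset.range M, a m f := by
      have := hM₀ M (le_max_left _ _) f hf
      rwa [Pi.sub_apply, Finset.sum_apply, sub_eq_zero] at this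
    let U : Finset (Idx N n) := (Finset.range M).biUnion fun m => (Q m).support
    have h2 : ∀ m ∈ Finset.range M, a m f = ∑ b ∈ U, tm b (Q m b) f := by
      intro m hm
      rw [← hQ m, Finsupp.sum, Finset.sum_apply]
      refine Finset.sum_subset (fun b hb => Finset.mem_biUnion.mpr ⟨m, hm, hb⟩) fun b _ hb => ?_
      rw [Finsupp.notMem_support_iff.mp hb, map_zero]; rfl
    have h3 : ∀ b, ∑ m ∈ Finset.range M, tm b (Q m b) f = tm b (c b) f := by
      intro b
      by_cases hb : n * r < dg b
      · rw [tm_zero hf hb]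
        exact Finset.sum_eq_zero fun m _ => tm_zero hf hb _
      · rw [map_sum, Finset.sum_apply]
        symm
        refine Finset.sum_subset (Finset.range_mono (by omega)) fun m _ hm => ?_
        rw [hQ0 m b (by simp at hm; omega), map_zero]; rfl
    rw [h1, Finset.sum_congr rfl h2, Finset.sum_comm, map_sum, Finset.sum_apply]
    simp only [h3]
    refine (tsum_eq_sum fun b hb => ?_).symm
    rw [← h3 b, Finset.sum_eq_zero fun m hm => ?_, map_zero]
    · rfl
    · have : Q m b = 0 := by
        by_contra h
        exact hb (Finset.mem_biUnion.mpr ⟨m, hm, Finsupp.mem_support_iff.mpr h⟩)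
      rw [this, map_zero]; rfl

/-! ### The input differential on tensor products of horizontal forms -/

/-- The total form degree `∑ |ε_j|` of a multidegree of inputs. -/
def Mw {N n : ℕ} (ε : Fin n → Fin N → Bool) : ℕ := ∑ j, wt (ε j)

/-- The multidegree of inputs obtained by wedging `dx^i` to the `j`-th factor, `q = (j, i)`. -/
def up {N n : ℕ} (ε : Fin n → Fin N → Bool) (q : Fin n × Fin N) : Fin n → Fin N → Bool :=
  Function.update ε q.1 (Function.update (ε q.1) q.2 true)

/-- The exponent of the Koszul sign of wedging `dx^i` to the `j`-th factor, `p = (j, i)`. -/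
def sg {N n : ℕ} (ε : Fin n → Fin N → Bool) (p : Fin n × Fin N) : ℕ :=
  (∑ l ∈ Finset.univ.filter fun l => l < p.1, wt (ε l)) + pos p.2 (ε p.1)

lemma up_apply {N n : ℕ} (ε : Fin n → Fin N → Bool) (q p : Fin n × Fin N) :
    up ε q p.1 p.2 = if p = q then true else ε p.1 p.2 := by
  obtain ⟨j, i⟩ := p
  obtain ⟨j', i'⟩ := q
  unfold up
  rcases eq_or_ne j j' with rfl | hj
  · rcases eq_or_ne i i' with rfl | hi
    · simp
    · simp [hi]
  · simp [hj]

lemma up_comm {N n : ℕ} (ε : Fin n → Fin N → Bool) (p q : Fin n × Fin N) :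
    up (up ε p) q = up (up ε q) p := by
  funext j i
  have h := fun ε q => up_apply (n := n) (N := N) ε q (j, i)
  simp only at h
  simp only [h]
  split_ifs <;> rfl

lemma wt_le {N : ℕ} (δ : Fin N → Bool) : wt δ ≤ N := by
  have := wt_compl δ
  omega

lemma wt_up_self {N n : ℕ} {ε : Fin n → Fin N → Bool} {q : Fin n × Fin N}
    (h : ε q.1 q.2 = false) : wt (up ε q q.1) = wt (ε q.1) + 1 := by
  have := wt_update q.2 (ε q.1) true
  simpa [h, up] using this

lemma Mw_up {N n : ℕ} {ε : Fin n → Fin N → Bool} {q : Fin n × Fin N} (h : ε q.1 q.2 = false) :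
    Mw (up ε q) = Mw ε + 1 := by
  unfold Mw
  rw [← Finset.add_sum_erase _ _ (Finset.mem_univ q.1), wt_up_self h,
    ← Finset.add_sum_erase _ (fun j => wt (ε j)) (Finset.mem_univ q.1)]
  have : ∑ l ∈ Finset.univ.erase q.1, wt (up ε q l) = ∑ l ∈ Finset.univ.erase q.1, wt (ε l) :=
    Finset.sum_congr rfl fun l hl => by
      rw [up, Function.update_of_ne (Finset.ne_of_mem_erase hl)]
  omega

lemma Mw_le {N n : ℕ} (ε : Fin n → Fin N → Bool) : Mw ε ≤ n * N :=
  (Finset.sum_le_card_nsmul _ _ N fun j _ => wt_le (ε j)).trans (by simp)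

/-- Wedging at `q` shifts the sign exponent at `p` exactly when `q` precedes `p` in the
lexicographic order. -/
lemma sg_up {N n : ℕ} {ε : Fin n → Fin N → Bool} {q : Fin n × Fin N} (h : ε q.1 q.2 = false)
    (p : Fin n × Fin N) :
    sg (up ε q) p = sg ε p + if q.1 < p.1 ∨ (q.1 = p.1 ∧ q.2 < p.2) then 1 else 0 := by
  have h1 : ∑ l ∈ Finset.univ.filter (fun l => l < p.1), wt (up ε q l) =
      (∑ l ∈ Finset.univ.filter fun l => l < p.1, wt (ε l)) + if q.1 < p.1 then 1 else 0 := by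
    have : ∀ l, wt (up ε q l) = wt (ε l) + if l = q.1 then 1 else 0 := by
      intro l
      rcases eq_or_ne l q.1 with rfl | hl
      · rw [wt_up_self h, if_pos rfl]
      · rw [up, Function.update_of_ne hl, if_neg hl, add_zero]
    simp only [this, Finset.sum_add_distrib, Finset.sum_ite_eq', Finset.mem_filter,
      Finset.mem_univ, true_and]
  have h2 : pos p.2 (up ε q p.1) =
      pos p.2 (ε p.1) + if q.1 = p.1 ∧ q.2 < p.2 then 1 else 0 := by
    rcases eq_or_ne q.1 p.1 with e | e
    · have := pos_update q.2 p.2 (ε q.1) true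
      rw [h] at this
      rw [up, e, Function.update_self, ← e]
      simpa using this
    · rw [up, Function.update_of_ne e.symm, if_neg (fun h => e h.1), add_zero]
  rw [sg, sg, h1, h2]
  by_cases hlt : q.1 < p.1
  · simp [hlt, hlt.ne]; omega
  · simp [hlt]; omega

section Input

variable {N n : ℕ} {V : Type*} [AddCommGroup V] [Module ℝ V]

/-- Precomposition with the differential `d_H^{⊗n}` of the input, built from operators `P j i`. -/
noncomputable def RV (P : Fin n → Fin N → Module.End ℝ V) (H : (Fin n → Fin N → Bool) → V)
    (ε : Fin n → Fin N → Bool) : V :=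
  ∑ p : Fin n × Fin N, if ε p.1 p.2 then 0 else (-1 : ℝ) ^ sg ε p • P p.1 p.2 (H (up ε p))

lemma RV_congr (P : Fin n → Fin N → Module.End ℝ V) {H H' : (Fin n → Fin N → Bool) → V}
    {ε : Fin n → Fin N → Bool} (h : ∀ ε', Mw ε' = Mw ε + 1 → H ε' = H' ε') :
    RV P H ε = RV P H' ε := by
  refine Finset.sum_congr rfl fun p _ => ?_
  rcases hp : ε p.1 p.2 with _ | _
  · rw [h _ (Mw_up hp)]
  · rfl

lemma RV_add (P : Fin n → Fin N → Module.End ℝ V) (H H' : (Fin n → Fin N → Bool) → V)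
    (ε : Fin n → Fin N → Bool) : RV P (fun ε => H ε + H' ε) ε = RV P H ε + RV P H' ε := by
  simp only [RV, ← Finset.sum_add_distrib]
  refine Finset.sum_congr rfl fun p _ => ?_
  split
  · simp
  · rw [map_add, smul_add]

lemma RV_smul (P : Fin n → Fin N → Module.End ℝ V) (c : ℝ) (H : (Fin n → Fin N → Bool) → V)
    (ε : Fin n → Fin N → Bool) : RV P (fun ε => c • H ε) ε = c • RV P H ε := by
  simp only [RV, Finset.smul_sum]
  refine Finset.sum_congr rfl fun p _ => ?_
  split
  · simp
  · rw [map_smul, smul_comm]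

/-- The square of the input differential vanishes. -/
lemma RV_RV {P : Fin n → Fin N → Module.End ℝ V}
    (hP : ∀ j j' i i' v, P j i (P j' i' v) = P j' i' (P j i v))
    (H : (Fin n → Fin N → Bool) → V) (ε : Fin n → Fin N → Bool) : RV P (RV P H) ε = 0 := by
  let T : Fin n × Fin N → Fin n × Fin N → V := fun p q => if ε p.1 p.2 then 0 else
    (-1 : ℝ) ^ sg ε p • P p.1 p.2 (if up ε p q.1 q.2 then 0 else
      (-1 : ℝ) ^ sg (up ε p) q • P q.1 q.2 (H (up (up ε p) q)))
  have hT : RV P (RV P H) ε = ∑ p, ∑ q, T p q := by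
    refine Finset.sum_congr rfl fun p _ => ?_
    by_cases hp : ε p.1 p.2 = true
    · simp only [T, hp, if_true, Finset.sum_const_zero]
    · simp only [T, hp, if_false, RV, map_sum, Finset.smul_sum, Bool.false_eq_true]
  have anti : ∀ p q, T p q + T q p = 0 := by
    intro p q
    simp only [T, up_apply]
    rcases eq_or_ne p q with rfl | hpq
    · simp
    · rcases hp : ε p.1 p.2 with _ | _
      · rcases hq : ε q.1 q.2 with _ | _
        · simp only [hpq, hpq.symm, if_false, Bool.false_eq_true, map_smul, smul_smul]
          rw [up_comm ε q p, hP q.1, ← add_smul, ← pow_add, ← pow_add, sg_up hp, sg_up hq]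
          have key : (-1 : ℝ) ^ (sg ε p + (sg ε q +
                if p.1 < q.1 ∨ (p.1 = q.1 ∧ p.2 < q.2) then 1 else 0)) =
              (-1) ^ (sg ε q + (sg ε p +
                if q.1 < p.1 ∨ (q.1 = p.1 ∧ q.2 < p.2) then 1 else 0) + 1) := by
            refine neg_one_pow_congr ?_
            have hne : p.1 ≠ q.1 ∨ p.2 ≠ q.2 := by
              by_contra! h
              exact hpq (Prod.ext h.1 h.2)
            rcases lt_trichotomy p.1 q.1 with h | h | h
            · simp only [h, h.asymm, h.ne', true_or, false_or, false_and, if_true, if_false,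
                Nat.even_iff]
              omega
            · rcases lt_or_gt_of_ne (hne.resolve_left (fun h' => h' h)) with h' | h'
              · simp only [h, lt_irrefl, h', h'.asymm, and_self, and_false, false_or, if_true,
                  if_false, Nat.even_iff]
                omega
              · simp only [h, lt_irrefl, h', h'.asymm, and_self, and_false, false_or, if_true,
                  if_false, Nat.even_iff]
                omega
            · simp only [h, h.asymm, h.ne', true_or, false_or, false_and, if_true, if_false,
                Nat.even_iff]
              omega
          rw [key, pow_succ]
          simp
        · simp
      · simp
  have h2 : (2 : ℝ) • RV P (RV P H) ε = 0 := by
    rw [two_smul, hT]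
    nth_rewrite 2 [Finset.sum_comm]
    rw [← Finset.sum_add_distrib]
    refine Finset.sum_eq_zero fun p _ => ?_
    rw [← Finset.sum_add_distrib]
    exact Finset.sum_eq_zero fun q _ => anti p q
  exact (smul_eq_zero.mp h2).resolve_left two_ne_zero

lemma dV_RV {D : Fin N → Module.End ℝ V} {P : Fin n → Fin N → Module.End ℝ V}
    (hPD : ∀ j i i' v, P j i (D i' v) = D i' (P j i v))
    (H : (Fin n → Fin N → Bool) → (Fin N → Bool) → V) (ε : Fin n → Fin N → Bool)
    (δ : Fin N → Bool) :
    dV D (fun δ => RV P (fun ε => H ε δ) ε) δ = RV P (fun ε => dV D (H ε) δ) ε := by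
  have h1 : dV D (fun δ => RV P (fun ε => H ε δ) ε) δ = ∑ i, ∑ p : Fin n × Fin N,
      if δ i then (if ε p.1 p.2 then 0 else (-1 : ℝ) ^ pos i δ • (-1 : ℝ) ^ sg ε p •
        P p.1 p.2 (D i (H (up ε p) (Function.update δ i false)))) else 0 := by
    refine Finset.sum_congr rfl fun i _ => ?_
    by_cases hi : δ i = true
    · simp only [hi, if_true, RV, map_sum, Finset.smul_sum]
      refine Finset.sum_congr rfl fun p _ => ?_
      split
      · simp
      · rw [map_smul, hPD]
    · simp [hi]
  rw [h1, Finset.sum_comm]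
  refine Finset.sum_congr rfl fun p _ => ?_
  by_cases hp : ε p.1 p.2 = true
  · simp [hp]
  · simp only [hp, dV, map_sum, Finset.smul_sum, Bool.false_eq_true, if_false]
    refine Finset.sum_congr rfl fun i _ => ?_
    split
    · rw [map_smul, smul_comm]
    · simp

lemma dV_add (D : Fin N → Module.End ℝ V) (ω η : (Fin N → Bool) → V) (δ : Fin N → Bool) :
    dV D (fun δ => ω δ + η δ) δ = dV D ω δ + dV D η δ := by
  simp only [dV, ← Finset.sum_add_distrib]
  refine Finset.sum_congr rfl fun p _ => ?_
  split
  · rw [map_add, smul_add]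
  · simp

lemma dV_smul (D : Fin N → Module.End ℝ V) (c : ℝ) (ω : (Fin N → Bool) → V) (δ : Fin N → Bool) :
    dV D (fun δ => c • ω δ) δ = c • dV D ω δ := by
  simp only [dV, Finset.smul_sum]
  refine Finset.sum_congr rfl fun p _ => ?_
  split
  · rw [map_smul, smul_comm]
  · simp

/-- If every closed output form of weight `< N` is exact, then a cycle whose components of input
degree `M` have output weight `M + a < N` is a boundary. The primitive is constructed by
decreasing induction on the input form degree `M`, beginning with the top forms. -/
lemma cycle_is_boundary {D : Fin N → Module.End ℝ V} {P : Fin n → Fin N → Module.End ℝ V}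
    (hP : ∀ j j' i i' v, P j i (P j' i' v) = P j' i' (P j i v))
    (hPD : ∀ j i i' v, P j i (D i' v) = D i' (P j i v))
    {G : Submodule ℝ V} (hPG : ∀ j i, ∀ v ∈ G, P j i v ∈ G)
    (hex : ∀ (w : ℕ), w < N → ∀ ω : (Fin N → Bool) → V, (∀ δ, ω δ ∈ G) →
      (∀ δ, wt δ ≠ w → ω δ = 0) → (∀ δ, dV D ω δ = 0) →
      ∃ η : (Fin N → Bool) → V, (∀ δ, η δ ∈ G) ∧ (∀ δ, wt δ + 1 ≠ w → η δ = 0) ∧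
        ∀ δ, dV D η δ = ω δ)
    {a : ℤ} (ha : a + n * N < N) (c : ℝ)
    {F : (Fin n → Fin N → Bool) → (Fin N → Bool) → V} (hFG : ∀ ε δ, F ε δ ∈ G)
    (hFw : ∀ ε δ, F ε δ ≠ 0 → (wt δ : ℤ) = a + Mw ε)
    (hF : ∀ ε δ, dV D (F ε) δ + c • RV P (fun ε => F ε δ) ε = 0) :
    ∃ H : (Fin n → Fin N → Bool) → (Fin N → Bool) → V, (∀ ε δ, H ε δ ∈ G) ∧
      (∀ ε δ, H ε δ ≠ 0 → (wt δ : ℤ) + 1 = a + Mw ε) ∧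
      ∀ ε δ, dV D (H ε) δ - c • RV P (fun ε => H ε δ) ε = F ε δ := by
  have ind : ∀ s : ℕ, ∃ H : (Fin n → Fin N → Bool) → (Fin N → Bool) → V, (∀ ε δ, H ε δ ∈ G) ∧
      (∀ ε δ, H ε δ ≠ 0 → (wt δ : ℤ) + 1 = a + Mw ε) ∧
      ∀ ε, n * N < Mw ε + s → ∀ δ, dV D (H ε) δ - c • RV P (fun ε => H ε δ) ε = F ε δ := by
    intro s
    induction s with
    | zero =>
      exact ⟨fun _ _ => 0, fun _ _ => zero_mem _, fun _ _ h => absurd rfl h,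
        fun ε h => absurd (Mw_le ε) (by omega)⟩
    | succ s ih =>
      obtain ⟨H, hHG, hHw, hH⟩ := ih
      have new : ∀ ε, ∃ η : (Fin N → Bool) → V, (∀ δ, η δ ∈ G) ∧
          (∀ δ, η δ ≠ 0 → (wt δ : ℤ) + 1 = a + Mw ε) ∧
          (Mw ε + s = n * N → ∀ δ, dV D η δ = F ε δ + c • RV P (fun ε => H ε δ) ε) := by
        intro ε
        by_cases hε : Mw ε + s = n * N
        swap
        · exact ⟨fun _ => 0, fun _ => zero_mem _, fun _ h => absurd rfl h, fun h => absurd h hε⟩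
        let ω : (Fin N → Bool) → V := fun δ => F ε δ + c • RV P (fun ε => H ε δ) ε
        have hωG : ∀ δ, ω δ ∈ G := fun δ => add_mem (hFG ε δ) (G.smul_mem _ (sum_mem fun p _ => by
          split
          · exact zero_mem _
          · exact G.smul_mem _ (hPG _ _ _ (hHG _ _))))
        have hωw : ∀ δ, (wt δ : ℤ) ≠ a + Mw ε → ω δ = 0 := by
          intro δ hδ
          have h1 : F ε δ = 0 := by
            by_contra h
            exact hδ (hFw ε δ h)
          have h2 : RV P (fun ε => H ε δ) ε = 0 := by
            refine Finset.sum_eq_zero fun p _ => ?_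
            rcases hp : ε p.1 p.2 with _ | _
            · have : H (up ε p) δ = 0 := by
                by_contra h
                have := hHw _ _ h
                rw [Mw_up hp] at this
                push_cast at this
                omega
              simp [this]
            · rfl
          simp only [ω, h1, h2, smul_zero, add_zero]
        have hωd : ∀ δ, dV D ω δ = 0 := by
          intro δ
          have e : RV P (fun ε => dV D (H ε) δ) ε =
              RV P (fun ε => F ε δ + c • RV P (fun ε => H ε δ) ε) ε :=
            RV_congr P fun ε' h' => by
              rw [← hH ε' (by omega) δ, sub_add_cancel]
          have e2 : RV P (fun ε => RV P (fun ε => H ε δ) ε) ε = 0 := RV_RV hP _ ε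
          simp only [ω]
          rw [dV_add, dV_smul, dV_RV hPD, e, RV_add, RV_smul, e2, smul_zero, add_zero]
          exact hF ε δ
        have hle : (Mw ε : ℤ) ≤ n * N := by exact_mod_cast Mw_le ε
        by_cases hneg : a + Mw ε < 0
        · refine ⟨fun _ => 0, fun _ => zero_mem _, fun _ h => absurd rfl h, fun _ δ => ?_⟩
          have : ω δ = 0 := hωw δ (by omega)
          refine Eq.trans ?_ this.symm
          simp [dV]
        · obtain ⟨w, hw⟩ := Int.eq_ofNat_of_zero_le (not_lt.mp hneg)
          obtain ⟨η, h1, h2, h3⟩ := hex w (by omega) ω hωG (fun δ h => hωw δ (by omega)) hωd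
          refine ⟨η, h1, fun δ h => ?_, fun _ => h3⟩
          by_contra h'
          exact h (h2 δ (by omega))
      choose η hηG hηw hη using new
      refine ⟨fun ε => if Mw ε + s = n * N then η ε else H ε, fun ε δ => ?_, fun ε δ h => ?_,
        fun ε hε δ => ?_⟩
      · dsimp only
        split
        · exact hηG ε δ
        · exact hHG ε δ
      · dsimp only at h
        split at h
        · exact hηw ε δ h
        · exact hHw ε δ h
      · have e : RV P (fun ε => (if Mw ε + s = n * N then η ε else H ε) δ) ε =
            RV P (fun ε => H ε δ) ε := RV_congr P fun ε' h' => by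
          rw [if_neg (by omega)]
        rw [e]
        by_cases h : Mw ε + s = n * N
        · simp only [if_pos h]
          rw [hη ε h δ, add_sub_cancel_right]
        · simp only [if_neg h]
          exact hH ε (by omega) δ
  obtain ⟨H, h1, h2, h3⟩ := ind (n * N + 1)
  exact ⟨H, h1, h2, fun ε δ => h3 ε (by omega) δ⟩

end Input

/-! ### The complex `DEnd` on local functions -/

lemma restricts_toFn_ne {N n : ℕ} {A : Op N n} {A' : VV N n} (h : Restricts A A') (hA : A' ≠ 0) :
    A ≠ 0 := by
  rintro rfl
  refine hA (funext fun f => toFn_injective ?_)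
  rw [← h f]
  exact (map_zero toFn).symm

/-- On local functions the differential of `DEnd` is composition with `d_H` on the output minus
`(-1)^k` times composition with `d_H^{⊗n}` on the input. -/
lemma deltaMat_toFn {N n : ℕ} (k : ℤ) {F : DMat N n}
    {F' : (Fin n → Fin N → Bool) → (Fin N → Bool) → VV N n}
    (h : ∀ εs δ, Restricts (F εs δ) (F' εs δ)) (εs : Fin n → Fin N → Bool) (δ : Fin N → Bool)
    (f : Fin n → LF N) :
    deltaMat k F εs δ (fun j => toFn (f j)) =
      toFn ((dV (DG N n) (F' εs) δ - (-1 : ℝ) ^ k • RV (PC N n) (fun εs => F' εs δ) εs) f) := by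
  have hu : ∀ (j : Fin n) (i : Fin N),
      Function.update (fun j => toFn (f j)) j (Dtot i (toFn (f j))) =
        fun l => toFn (Function.update f j (De i (f j)) l) := by
    intro j i
    funext l
    rcases eq_or_ne l j with rfl | hl
    · rw [Function.update_self, Function.update_self, toFn_De]
    · rw [Function.update_of_ne hl, Function.update_of_ne hl]
  have h1 : (fun pt => ∑ i : Fin N, if δ i then (-1 : ℝ) ^ pos i δ *
      Dtot i (F εs (Function.update δ i false) fun j => toFn (f j)) pt else 0) =
      toFn (dV (DG N n) (F' εs) δ f) := by
    funext pt
    rw [dV, Finset.sum_apply, map_sum, Finset.sum_apply]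
    refine Finset.sum_congr rfl fun i _ => ?_
    split
    · rw [h εs _ f, Pi.smul_apply, map_smul, DG_apply, toFn_De]; rfl
    · exact (congrFun (map_zero toFn) pt).symm
  have h2 : (fun pt => ∑ j : Fin n, ∑ i : Fin N,
      if εs j i = false then
        (-1 : ℝ) ^ ((∑ l ∈ Finset.univ.filter fun l => l < j, wt (εs l)) + pos i (εs j)) *
          F (Function.update εs j (Function.update (εs j) i true)) δ
            (Function.update (fun j => toFn (f j)) j (Dtot i (toFn (f j)))) pt
      else 0) = toFn (RV (PC N n) (fun εs => F' εs δ) εs f) := by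
    funext pt
    rw [RV, Finset.sum_apply, map_sum, Finset.sum_apply, Fintype.sum_prod_type]
    refine Finset.sum_congr rfl fun j _ => Finset.sum_congr rfl fun i _ => ?_
    dsimp only
    rcases hp : εs j i with _ | _
    · rw [if_pos rfl, if_neg Bool.false_ne_true, hu, h _ δ, Pi.smul_apply, map_smul, PC_apply]; rfl
    · exact (congrFun (map_zero toFn) pt).symm
  rw [deltaMat, h1, h2, Pi.sub_apply, Pi.smul_apply, map_sub, map_smul]

lemma sum_compl_wt {N n : ℕ} (εs : Fin n → Fin N → Bool) :
    ∑ j, ((N : ℤ) - (wt (εs j) : ℤ)) = n * N - Mw εs := by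
  simp [Mw]

/-- The extension of an operator on bundled local functions by zero to all tuples. -/
noncomputable def extend {N n : ℕ} (A : VV N n) : Op N n := fun g =>
  open Classical in
  if h : LocalTuple g then toFn (A (Classical.choose (exists_LF h))) else 0

lemma restricts_extend {N n : ℕ} (A : VV N n) : Restricts (extend A) A := by
  intro f
  have h := localTuple_toFn f
  rw [extend, dif_pos h]
  congr 2
  funext j
  exact toFn_injective (congrFun (Classical.choose_spec (exists_LF h)) j).symm

lemma extend_zero {N n : ℕ} : extend (0 : VV N n) = 0 := by
  funext g
  rw [extend]
  split
  · exact map_zero toFn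
  · rfl

/-- The complex `(DEnd_*(n), δ)` is acyclic in positive dimensions:
every cycle of degree `k > 0` is a boundary. -/
theorem DEnd_acyclic_positive {N n : ℕ} [NeZero n] (k : ℤ) (hk : 0 < k)
    (F : DMat N n) (hF : LDOMat F) (hgr : GradedMat k F)
    (hcyc : MatZeroLoc (deltaMat k F)) :
    ∃ H : DMat N n, LDOMat H ∧ GradedMat (k + 1) H ∧ MatEqLoc (deltaMat (k + 1) H) F := by
  choose F' hG hR using fun εs δ => (hF εs δ).exists_G
  have hc : (-1 : ℝ) ^ (k + 1) = -(-1) ^ k := by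
    rw [zpow_add_one₀ (by norm_num), mul_neg_one]
  obtain ⟨H, hHG, hHw, hH⟩ := cycle_is_boundary (D := DG N n) (P := PC N n) (G := G N n)
    (a := N - k - n * N) PC_comm (fun _ _ _ _ => rfl) (fun j i v hv => PC_G j i hv)
    (fun w hw ω => exact_G hw) (by omega) ((-1 : ℝ) ^ (k + 1)) hG
    (fun ε δ h => by
      have := hgr ε δ (restricts_toFn_ne (hR ε δ) h)
      rw [sum_compl_wt] at this
      omega)
    (fun ε δ => by
      rw [hc, neg_smul, ← sub_eq_add_neg]
      refine funext fun f => toFn_injective ?_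
      rw [← deltaMat_toFn k hR ε δ f]
      exact (funext fun pt => hcyc ε δ _ (localTuple_toFn f) pt).trans (map_zero toFn).symm)
  have hHR : ∀ εs δ, Restricts (extend (H εs δ)) (H εs δ) := fun _ _ => restricts_extend _
  refine ⟨fun εs δ => extend (H εs δ), fun εs δ => IsPLDO.of_G (hHG εs δ) (hHR εs δ),
    fun εs δ h => ?_, fun εs δ g hg pt => ?_⟩
  · have := hHw εs δ fun h0 => h (by dsimp only; rw [h0, extend_zero])
    rw [sum_compl_wt]
    omega
  · obtain ⟨f, rfl⟩ := exists_LF hg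
    rw [deltaMat_toFn (k + 1) hHR εs δ f, hH εs δ, hR εs δ f]

end JetBundle
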